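/- arXiv:2208.14126 — 4 statements merged into one kernel-verified Lean document; each statement's English description precedes it below -/
import Mathlib

section
/- There exists a minimal graph story S = (G, ω, τ) such that: (i) G is planar; (ii) S is realizable; and (iii) S does not admit a supporting embedding. In particular this holds for a triconnected planar graph G on 10 vertices with ω = 8, where G has a unique planar embedding up to a flip and the choice of the external face, yet in any realization of S some drawing Γ_i has an embedding that is not the restriction of that embedding of G to G_i. -/
open Set

namespace GraphStories

/-- Points of the plane. -/
abbrev Pt : Type := ℝ × ℝ

/-- The vertex set of the window graph `G_i` (time `i` is 1-indexed, vertex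
`v_j : Fin n` sits at position `j+1` in the ordering `τ`):
`v_j ∈ G_i` iff `max{1, i-ω+1} ≤ j+1 ≤ i`. -/
def window (n ω i : ℕ) : Set (Fin n) := {j | j.val + 1 ≤ i ∧ i ≤ j.val + ω}

/-- All edges of `G` are visible: `|i - j| < ω` for every edge `(v_i, v_j)`. -/
def Visible (n ω : ℕ) (G : SimpleGraph (Fin n)) : Prop :=
  ∀ u v : Fin n, G.Adj u v → u.val < v.val + ω ∧ v.val < u.val + ω

/-- The data of a drawing: a position for every vertex, and a parametrized curve
for every (ordered) pair of vertices (only the data attached to the vertices and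
edges of the relevant subgraph is meaningful). -/
structure RawDrawing (n : ℕ) where
  pos : Fin n → Pt
  curve : Fin n → Fin n → ℝ → Pt

/-- `γ` (restricted to `[0,1]`) is a Jordan arc from `a` to `b`. -/
def IsArcFrom (γ : ℝ → Pt) (a b : Pt) : Prop :=
  ContinuousOn γ (Icc 0 1) ∧ InjOn γ (Icc 0 1) ∧ γ 0 = a ∧ γ 1 = b

/-- The set of points of an arc. -/
def arcBody (γ : ℝ → Pt) : Set Pt := γ '' Icc (0 : ℝ) 1

/-- The set of interior points of an arc (endpoints removed). -/
def arcInterior (γ : ℝ → Pt) : Set Pt := γ '' Ioo (0 : ℝ) 1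

/-- `D` is a planar drawing of the subgraph of `G` induced by `S`, with the
vertices mapped to (distinct) points of `P` and the edges drawn as Jordan arcs
which pairwise do not intersect except at common endpoints. -/
structure IsPlanarDrawingOn (n : ℕ) (G : SimpleGraph (Fin n)) (S : Set (Fin n))
    (P : Set Pt) (D : RawDrawing n) : Prop where
  pos_mem : ∀ v ∈ S, D.pos v ∈ P
  pos_inj : InjOn D.pos S
  curve_symm : ∀ u v : Fin n, D.curve v u = fun t => D.curve u v (1 - t)
  arc : ∀ u ∈ S, ∀ v ∈ S, G.Adj u v → IsArcFrom (D.curve u v) (D.pos u) (D.pos v)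
  vertex_off_arc : ∀ u ∈ S, ∀ v ∈ S, G.Adj u v → ∀ w ∈ S,
      D.pos w ∉ arcInterior (D.curve u v)
  no_cross : ∀ u ∈ S, ∀ v ∈ S, ∀ x ∈ S, ∀ y ∈ S, G.Adj u v → G.Adj x y →
      s(u, v) ≠ s(x, y) →
      arcInterior (D.curve u v) ∩ arcInterior (D.curve x y) = ∅

/-- `D` is a planar drawing of the subgraph of `G` induced by `S` (anywhere in
the plane). -/
def IsPlanarDrawing (n : ℕ) (G : SimpleGraph (Fin n)) (S : Set (Fin n))
    (D : RawDrawing n) : Prop :=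
  IsPlanarDrawingOn n G S univ D

/-- A realization of the graph story `(G, ω, k, τ)` on the point set `P`:
a sequence `Γ_1, …, Γ_n` of planar drawings of the window graphs `G_1, …, G_n`
on `P` (property R1) such that consecutive drawings restrict identically
(vertex positions and edge arcs) to the common subgraph `G_{i-1} ∩ G_i`
(property R2). -/
structure Realization (n ω : ℕ) (G : SimpleGraph (Fin n)) (P : Set Pt) where
  Γ : ℕ → RawDrawing n
  planar : ∀ i, 1 ≤ i → i ≤ n → IsPlanarDrawingOn n G (window n ω i) P (Γ i)
  pos_eq : ∀ i, 2 ≤ i → i ≤ n → ∀ v ∈ window n ω (i - 1) ∩ window n ω i,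
      (Γ i).pos v = (Γ (i - 1)).pos v
  curve_eq : ∀ i, 2 ≤ i → i ≤ n →
      ∀ u ∈ window n ω (i - 1) ∩ window n ω i,
      ∀ v ∈ window n ω (i - 1) ∩ window n ω i,
      G.Adj u v → (Γ i).curve u v = (Γ (i - 1)).curve u v

/-- The story `(G, ω, k, τ)` admits a realization on the point set `P`. -/
def RealizableOn (n ω : ℕ) (G : SimpleGraph (Fin n)) (P : Set Pt) : Prop :=
  Nonempty (Realization n ω G P)

/-- The story `(G, ω, k, τ)` is realizable: it admits a realization on some set
of `ω + k` points. -/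
def Realizable (n ω k : ℕ) (G : SimpleGraph (Fin n)) : Prop :=
  ∃ P : Finset Pt, P.card = ω + k ∧ RealizableOn n ω G ↑P


/-- The set of points of the plane used by the drawing `D` of the subgraph of
`G` induced by `S` (vertex points and edge arcs). -/
def drawingImage (n : ℕ) (G : SimpleGraph (Fin n)) (S : Set (Fin n))
    (D : RawDrawing n) : Set Pt :=
  (D.pos '' S) ∪
    ⋃ (u : Fin n) (v : Fin n) (_ : u ∈ S) (_ : v ∈ S) (_ : G.Adj u v),
      arcBody (D.curve u v)

/-- The two drawings `D, D'` of the subgraph of `G` induced by `S`, carrying the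
respective sets `Q, Q'` of marked points, determine the same (face-weighted)
planar embedding: some self-homeomorphism of the plane maps the first drawing
onto the second, vertex-by-vertex and arc-by-arc, and maps the first set of
marked points onto the second (so corresponding faces carry equally many
marked points).  Weights of faces are represented by marked points lying
inside them. -/
def SameMarkedEmbedding (n : ℕ) (G : SimpleGraph (Fin n)) (S : Set (Fin n))
    (D D' : RawDrawing n) (Q Q' : Set Pt) : Prop :=
  ∃ φ : Homeomorph Pt Pt,
    (∀ v ∈ S, φ (D.pos v) = D'.pos v) ∧
    (∀ u ∈ S, ∀ v ∈ S, G.Adj u v →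
        φ '' arcBody (D.curve u v) = arcBody (D'.curve u v)) ∧
    φ '' Q = Q'

/-- A face-`k`-weighted planar embedding of the subgraph of `G` induced by `S`,
represented by a planar drawing together with `k` marked points placed off the
drawing (the weight of a face is the number of marked points it contains). -/
structure WeightedDrawing (n k : ℕ) (G : SimpleGraph (Fin n)) (S : Set (Fin n)) where
  D : RawDrawing n
  planar : IsPlanarDrawing n G S D
  marks : Finset Pt
  marks_card : marks.card = k
  marks_off : ∀ p ∈ marks, p ∉ drawingImage n G S D

/-- Compatibility of two consecutive face-`k`-weighted planar embeddings
`W` of `G_{i-1}` and `W'` of `G_i`: removing the vertex `v_{i-ω}` from `W`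
(replacing it by one extra marked point, accounting for the weight increase of
the merged face) yields the same face-`(k+1)`-weighted planar embedding of
`G_{i-1} ∩ G_i` as removing `v_i` from `W'`. -/
def CompatiblePair (n ω k : ℕ) (G : SimpleGraph (Fin n)) (i : ℕ)
    (W : WeightedDrawing n k G (window n ω (i - 1)))
    (W' : WeightedDrawing n k G (window n ω i)) : Prop :=
  ∃ a b : Fin n, a.val + 1 + ω = i ∧ b.val + 1 = i ∧
    SameMarkedEmbedding n G (window n ω (i - 1) ∩ window n ω i) W.D W'.D
      (↑W.marks ∪ {W.D.pos a}) (↑W'.marks ∪ {W'.D.pos b})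

/-- `G` (on `Fin n`) is a planar graph: it admits a planar drawing. -/
def PlanarGraph (n : ℕ) (G : SimpleGraph (Fin n)) : Prop :=
  ∃ D : RawDrawing n, IsPlanarDrawing n G univ D

/-- `G` is triconnected: it has at least `4` vertices and removing any at most
two vertices leaves it connected. -/
def ThreeConnected (n : ℕ) (G : SimpleGraph (Fin n)) : Prop :=
  4 ≤ n ∧ ∀ s : Finset (Fin n), s.card ≤ 2 →
    (SimpleGraph.induce {v : Fin n | v ∉ s} G).Connected

/-- The (drawing representing the) planar embedding `Δ` of `G` is a supporting
embedding for the minimal story `(G, ω, τ)`: the story admits a realization in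
which, for every `i`, the embedding of the `i`-th drawing is the restriction of
the embedding of `Δ` to `G_i` (expressed by the existence of a plane
homeomorphism matching the two drawings of `G_i`, i.e. the two drawings are
equivalent). -/
def IsSupportingDrawing (n ω : ℕ) (G : SimpleGraph (Fin n)) (Δ : RawDrawing n) : Prop :=
  IsPlanarDrawing n G univ Δ ∧
  ∃ P : Finset Pt, P.card = ω + 0 ∧
    ∃ R : Realization n ω G ↑P,
      ∀ i, 1 ≤ i → i ≤ n →
        SameMarkedEmbedding n G (window n ω i) Δ (R.Γ i) ∅ ∅

/-- Continuous logarithms exist on real normed spaces. -/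
lemma exists_clog {E : Type*} [NormedAddCommGroup E] [NormedSpace ℝ E] (f : E → ℂ)
    (hf : Continuous f) (h0 : ∀ z, f z ≠ 0) :
    ∃ L : E → ℂ, Continuous L ∧ ∀ z, Complex.exp (L z) = f z := by
  obtain ⟨F, ⟨-, hF⟩, -⟩ := Complex.isCoveringMapOn_exp.existsUnique_continuousMap_lifts
    (⟨f, hf⟩ : C(E, ℂ)) (a₀ := 0) (e₀ := Complex.log (f 0)) (Complex.exp_log (h0 0))
    (fun a => h0 a)
  exact ⟨F, F.continuous, fun z => congrFun hF z⟩

lemma const_of_exp {E : Type*} [TopologicalSpace E] [PreconnectedSpace E] (D : E → ℂ)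
    (hD : Continuous D) (h1 : ∀ z, Complex.exp (D z) = 1) (z w : E) : D z = D w := by
  refine Complex.isCoveringMap_exp.const_of_comp hD ?_ z w
  intro a b
  simp [h1]

lemma clog_sub {E : Type*} [TopologicalSpace E] [PreconnectedSpace E] {L L' : E → ℂ}
    (hL : Continuous L) (hL' : Continuous L')
    (h : ∀ z, Complex.exp (L z) = Complex.exp (L' z)) (z w : E) : L z - L w = L' z - L' w := by
  have := const_of_exp (fun z => L z - L' z) (hL.sub hL')
    (fun z => by rw [Complex.exp_sub, h, div_self (Complex.exp_ne_zero _)]) z w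
  linear_combination this

/-- Total change of the logarithm of `γ - p` along `γ` restricted to `[0,1]`. -/
noncomputable def chg (γ : ℝ → ℂ) (p : ℂ) : ℂ :=
  open Classical in
  if h : ∃ L : ℝ → ℂ, Continuous L ∧ ∀ t, Complex.exp (L t) = γ t - p then
    h.choose 1 - h.choose 0 else 0

lemma chg_eq {γ : ℝ → ℂ} {p : ℂ} {L : ℝ → ℂ} (hL : Continuous L)
    (h : ∀ t, Complex.exp (L t) = γ t - p) : chg γ p = L 1 - L 0 := by
  have hex : ∃ L : ℝ → ℂ, Continuous L ∧ ∀ t, Complex.exp (L t) = γ t - p := ⟨L, hL, h⟩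
  rw [chg, dif_pos hex]
  exact clog_sub hex.choose_spec.1 hL (fun z => by rw [h, hex.choose_spec.2]) 1 0

lemma chg_eq' {γ : ℝ → ℂ} {p : ℂ} {L : ℝ → ℂ} (hL : Continuous L)
    (h : ∀ t, Complex.exp (L t) = p - γ t) : chg γ p = L 1 - L 0 := by
  rw [chg_eq (L := fun t => L t + Real.pi * Complex.I) (by fun_prop)]
  · ring
  · intro t
    rw [Complex.exp_add, h, Complex.exp_pi_mul_I]; ring

lemma exp_chg {γ : ℝ → ℂ} (hγ : Continuous γ) {p : ℂ} (hp : ∀ t, γ t ≠ p) :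
    Complex.exp (chg γ p) = (γ 1 - p) / (γ 0 - p) := by
  obtain ⟨L, hL, h⟩ := exists_clog (fun t => γ t - p) (by fun_prop) (fun t => sub_ne_zero.2 (hp t))
  rw [chg_eq hL h, Complex.exp_sub, h, h]

lemma square {e f : ℝ → ℂ} (he : Continuous e) (hf : Continuous f) (hd : ∀ s t, e s ≠ f t) :
    chg f (e 0) + chg e (f 1) - chg f (e 1) - chg e (f 0) = 0 := by
  obtain ⟨L, hL, h⟩ := exists_clog (fun z : ℝ × ℝ => f z.2 - e z.1) (by fun_prop)
    (fun z => sub_ne_zero.2 (hd _ _).symm)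
  rw [chg_eq (γ := f) (p := e 0) (L := fun t => L (0, t)) (by fun_prop) (fun t => h _),
    chg_eq (γ := f) (p := e 1) (L := fun t => L (1, t)) (by fun_prop) (fun t => h _),
    chg_eq' (γ := e) (p := f 0) (L := fun t => L (t, 0)) (by fun_prop) (fun t => h _),
    chg_eq' (γ := e) (p := f 1) (L := fun t => L (t, 1)) (by fun_prop) (fun t => h _)]
  ring

/-- Winding numbers in a planar drawing of `K₅` minus an edge. -/
lemma k5_identity (x y a b c : ℂ) (ab bc ca xa xb xc ya yb yc : ℝ → ℂ)
    (cab : Continuous ab) (cbc : Continuous bc) (cca : Continuous ca)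
    (cxa : Continuous xa) (cxb : Continuous xb) (cxc : Continuous xc)
    (cya : Continuous ya) (cyb : Continuous yb) (cyc : Continuous yc)
    (ab0 : ab 0 = a) (ab1 : ab 1 = b) (bc0 : bc 0 = b) (bc1 : bc 1 = c)
    (ca0 : ca 0 = c) (ca1 : ca 1 = a)
    (xa0 : xa 0 = x) (xa1 : xa 1 = a) (xb0 : xb 0 = x) (xb1 : xb 1 = b)
    (xc0 : xc 0 = x) (xc1 : xc 1 = c)
    (ya0 : ya 0 = y) (ya1 : ya 1 = a) (yb0 : yb 0 = y) (yb1 : yb 1 = b)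
    (yc0 : yc 0 = y) (yc1 : yc 1 = c)
    (d1 : ∀ s t, xc s ≠ ab t) (d2 : ∀ s t, xa s ≠ bc t) (d3 : ∀ s t, xb s ≠ ca t)
    (d4 : ∀ s t, yc s ≠ ab t) (d5 : ∀ s t, ya s ≠ bc t) (d6 : ∀ s t, yb s ≠ ca t)
    (e1 : ∀ s t, xa s ≠ yb t) (e2 : ∀ s t, xb s ≠ yc t) (e3 : ∀ s t, xc s ≠ ya t)
    (e4 : ∀ s t, xa s ≠ yc t) (e5 : ∀ s t, xb s ≠ ya t) (e6 : ∀ s t, xc s ≠ yb t)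
    (hab : a ≠ b) (hbc : b ≠ c) (hca : c ≠ a) :
    ∃ S : ℂ, Complex.exp S = -1 ∧
      (chg ab x + chg bc x + chg ca x) + (chg ab y + chg bc y + chg ca y) = 2 * S := by
  refine ⟨chg ab c + chg bc a + chg ca b, ?_, ?_⟩
  · rw [Complex.exp_add, Complex.exp_add, exp_chg cab (fun t => by rw [← xc1]; exact (d1 1 t).symm),
      exp_chg cbc (fun t => by rw [← xa1]; exact (d2 1 t).symm),
      exp_chg cca (fun t => by rw [← xb1]; exact (d3 1 t).symm), ab0, ab1, bc0, bc1, ca0, ca1]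
    have h1 := sub_ne_zero.2 hab
    have h2 := sub_ne_zero.2 hbc
    have h3 := sub_ne_zero.2 hca
    have h1' := sub_ne_zero.2 hab.symm
    have h2' := sub_ne_zero.2 hbc.symm
    have h3' := sub_ne_zero.2 hca.symm
    field_simp
    ring
  · have q1 := square cxc cab d1
    have q2 := square cxa cbc d2
    have q3 := square cxb cca d3
    have q4 := square cyc cab d4
    have q5 := square cya cbc d5
    have q6 := square cyb cca d6
    have r1 := square cxa cyb e1
    have r2 := square cxb cyc e2
    have r3 := square cxc cya e3
    have r4 := square cxa cyc e4
    have r5 := square cxb cya e5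
    have r6 := square cxc cyb e6
    simp only [ab0, ab1, bc0, bc1, ca0, ca1, xa0, xa1, xb0, xb1, xc0, xc1, ya0, ya1, yb0, yb1,
      yc0, yc1] at q1 q2 q3 q4 q5 q6 r1 r2 r3 r4 r5 r6
    linear_combination q1 + q2 + q3 + q4 + q5 + q6 + r1 + r2 + r3 - r4 - r5 - r6

/-- Winding numbers of a closed curve transform by a multiplication under homeomorphisms. -/
lemma homeo_winding (ψ : ℂ → ℂ) (hψ : Continuous ψ) (hinj : Function.Injective ψ) (x : ℂ)
    (α β γ : ℝ → ℂ) (ca : Continuous α) (cb : Continuous β) (cc : Continuous γ)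
    (hα : ∀ t, α t ≠ x) (hβ : ∀ t, β t ≠ x) (hγ : ∀ t, γ t ≠ x)
    (h1 : α 1 = β 0) (h2 : β 1 = γ 0) (m : ℤ)
    (hm : chg α x + chg β x + chg γ x = m * (2 * Real.pi * Complex.I)) :
    ∃ k : ℤ, chg (ψ ∘ α) (ψ x) + chg (ψ ∘ β) (ψ x) + chg (ψ ∘ γ) (ψ x)
      = (k * m : ℤ) * (2 * Real.pi * Complex.I) := by
  obtain ⟨L, hL, hLe⟩ := exists_clog (fun z : ℂ => ψ (Complex.exp z + x) - ψ x) (by fun_prop)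
    (fun z => sub_ne_zero.2 (fun h => Complex.exp_ne_zero z (by simpa using hinj h)))
  obtain ⟨l1, cl1, hl1⟩ := exists_clog (fun t => α t - x) (by fun_prop)
    (fun t => sub_ne_zero.2 (hα t))
  obtain ⟨l2, cl2, hl2⟩ := exists_clog (fun t => β t - x) (by fun_prop)
    (fun t => sub_ne_zero.2 (hβ t))
  obtain ⟨l3, cl3, hl3⟩ := exists_clog (fun t => γ t - x) (by fun_prop)
    (fun t => sub_ne_zero.2 (hγ t))
  -- normalise the logarithms
  have e2 : ∀ t, Complex.exp (l2 t + (l1 1 - l2 0)) = β t - x := by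
    intro t
    rw [Complex.exp_add, Complex.exp_sub, hl2, hl1, hl2, h1,
      div_self (sub_ne_zero.2 (hβ 0)), mul_one]
  have e3 : ∀ t, Complex.exp (l3 t + (l2 1 + (l1 1 - l2 0) - l3 0)) = γ t - x := by
    intro t
    rw [Complex.exp_add, Complex.exp_sub, hl3, e2, hl3, h2,
      div_self (sub_ne_zero.2 (hγ 0)), mul_one]
  rw [chg_eq cl1 hl1, chg_eq cl2 hl2, chg_eq cl3 hl3] at hm
  have key : ∀ (δ l : ℝ → ℂ), Continuous l → (∀ t, Complex.exp (l t) = δ t - x) →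
      chg (ψ ∘ δ) (ψ x) = L (l 1) - L (l 0) := by
    intro δ l cl hl
    refine chg_eq (L := fun t => L (l t)) (by fun_prop) (fun t => ?_)
    rw [hLe, hl]; simp
  rw [key α l1 cl1 hl1, key β _ (by fun_prop) e2, key γ _ (by fun_prop) e3]
  have s1 : l2 0 + (l1 1 - l2 0) = l1 1 := by ring
  have s2 : l3 0 + (l2 1 + (l1 1 - l2 0) - l3 0) = l2 1 + (l1 1 - l2 0) := by ring
  have s3 : l3 1 + (l2 1 + (l1 1 - l2 0) - l3 0) = l1 0 + m * (2 * Real.pi * Complex.I) := by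
    linear_combination hm
  rw [s1, s2, s3]
  have per : ∃ k : ℤ, ∀ z, L (z + 2 * Real.pi * Complex.I) = L z + k * (2 * Real.pi * Complex.I) := by
    have hp : ∀ z, Complex.exp (L (z + 2 * Real.pi * Complex.I)) = Complex.exp (L z) := by
      intro z
      rw [hLe, hLe, Complex.exp_periodic z]
    obtain ⟨k, hk⟩ := Complex.exp_eq_exp_iff_exists_int.1 (hp 0)
    refine ⟨k, fun z => ?_⟩
    have := clog_sub (L := fun z => L (z + 2 * Real.pi * Complex.I)) (by fun_prop) hL hp z 0
    linear_combination this + hk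
  obtain ⟨k, hk⟩ := per
  have hk' : ∀ (n : ℤ) z, L (z + n * (2 * Real.pi * Complex.I))
      = L z + (k * n : ℤ) * (2 * Real.pi * Complex.I) := by
    intro n
    induction n using Int.induction_on with
    | zero => simp
    | succ i ih =>
      intro z
      have := hk (z + i * (2 * Real.pi * Complex.I))
      push_cast at ih ⊢
      rw [ih] at this
      rw [show z + ((i : ℂ) + 1) * (2 * Real.pi * Complex.I)
        = z + i * (2 * Real.pi * Complex.I) + 2 * Real.pi * Complex.I by ring, this]
      ring
    | pred i ih =>
      intro z
      have := hk (z + (-(i : ℂ) - 1) * (2 * Real.pi * Complex.I))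
      rw [show z + (-(i : ℂ) - 1) * (2 * Real.pi * Complex.I) + 2 * Real.pi * Complex.I
        = z + (-(i : ℂ)) * (2 * Real.pi * Complex.I) by ring] at this
      have h2 := ih z
      push_cast at h2 ⊢
      rw [this] at h2
      linear_combination h2
  refine ⟨k, ?_⟩
  rw [hk' m]
  ring

/-- The change of logarithm does not depend on the parametrisation of an arc. -/
lemma chg_reparam {γ δ : ℝ → ℂ} (hγ : Continuous γ) (hinj : InjOn γ (Icc 0 1))
    (hδ : Continuous δ) (hsub : ∀ t, δ t ∈ γ '' Icc 0 1) (h0 : δ 0 = γ 0) (h1 : δ 1 = γ 1)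
    {p : ℂ} (hp : ∀ t, γ t ≠ p) : chg δ p = chg γ p := by
  let g : Icc (0 : ℝ) 1 → ℂ := fun t => γ t
  have hg : Topology.IsClosedEmbedding g :=
    Continuous.isClosedEmbedding (by fun_prop)
      (fun s t h => Subtype.ext (hinj s.2 t.2 h))
  have hmem : ∀ t, ∃ s : Icc (0 : ℝ) 1, g s = δ t := fun t => by
    obtain ⟨s, hs, h⟩ := hsub t
    exact ⟨⟨s, hs⟩, h⟩
  choose σ hσ using hmem
  have cσ : Continuous σ := by
    rw [hg.isInducing.continuous_iff]
    have : g ∘ σ = δ := funext hσ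
    rwa [this]
  obtain ⟨l, cl, hl⟩ := exists_clog (fun t => γ t - p) (by fun_prop)
    (fun t => sub_ne_zero.2 (hp t))
  have z0 : (σ 0 : ℝ) = 0 := hinj (σ 0).2 (by simp) ((hσ 0).trans h0)
  have z1 : (σ 1 : ℝ) = 1 := hinj (σ 1).2 (by simp) ((hσ 1).trans h1)
  rw [chg_eq cl hl, chg_eq (γ := δ) (L := fun t => l (σ t)) (by fun_prop)
    (fun t => by rw [hl, ← hσ t]), z0, z1]

/-! ### The graph -/

/-- The edges of the graph, each listed once. -/
def edgeList : List (ℕ × ℕ) :=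
  [(2, 3), (3, 4), (2, 4), (0, 2), (0, 3), (0, 4), (2, 8), (3, 8), (4, 8), (0, 1), (1, 3), (1, 4),
   (8, 9), (3, 9), (4, 9), (0, 5), (4, 5), (2, 5), (0, 6), (2, 6), (3, 6), (0, 7), (2, 7), (5, 7)]

def adjB (u v : Fin 10) : Bool :=
  edgeList.contains (u.val, v.val) || edgeList.contains (v.val, u.val)

/-- A stacked triangulation on ten vertices. -/
def gr : SimpleGraph (Fin 10) where
  Adj u v := adjB u v = true
  symm := ⟨by decide +kernel⟩
  loopless := ⟨by decide +kernel⟩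

lemma gr_visible : Visible 10 8 gr := by
  have : ∀ u v : Fin 10, adjB u v = true → u.val < v.val + 8 ∧ v.val < u.val + 8 := by
    decide +kernel
  exact this

lemma three_avoid {s : Finset (Fin 10)} (hs : s.card ≤ 2) {p q r : Fin 10}
    (h : p ≠ q ∧ p ≠ r ∧ q ≠ r) : p ∉ s ∨ q ∉ s ∨ r ∉ s := by
  by_contra! hc
  have hsub : ({p, q, r} : Finset (Fin 10)) ⊆ s := by
    intro z hz
    simp only [Finset.mem_insert, Finset.mem_singleton] at hz
    rcases hz with rfl | rfl | rfl
    exacts [hc.1, hc.2.1, hc.2.2]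
  have := Finset.card_le_card hsub
  rw [Finset.card_eq_three.2 ⟨p, q, r, h.1, h.2.1, h.2.2, rfl⟩] at this
  omega

lemma gr_three : ThreeConnected 10 gr := by
  refine ⟨by norm_num, fun s hs => ?_⟩
  obtain ⟨b, hb, hb'⟩ : ∃ b : Fin 10, b ∉ s ∧ (b = 2 ∨ b = 3 ∨ b = 4) := by
    rcases three_avoid hs (p := 2) (q := 3) (r := 4) (by decide) with h | h | h
    exacts [⟨_, h, by simp⟩, ⟨_, h, by simp⟩, ⟨_, h, by simp⟩]
  let H := SimpleGraph.induce {v : Fin 10 | v ∉ s} gr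
  let B : {v : Fin 10 | v ∉ s} := ⟨b, hb⟩
  have base : ∀ v : Fin 10, (v = 0 ∨ v = 2 ∨ v = 3 ∨ v = 4) → ∀ hv : v ∉ s,
      H.Reachable ⟨v, hv⟩ B := by
    intro v hv hvs
    have hor : v = b ∨ adjB v b = true := by
      rcases hv with rfl | rfl | rfl | rfl <;> rcases hb' with rfl | rfl | rfl <;> decide
    rcases hor with rfl | h
    · exact SimpleGraph.Reachable.refl _
    · exact SimpleGraph.Adj.reachable (show gr.Adj v b from h)
  have step : ∀ v p q r : Fin 10, (p ≠ q ∧ p ≠ r ∧ q ≠ r) →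
      (adjB v p = true ∧ adjB v q = true ∧ adjB v r = true) →
      (∀ h : p ∉ s, H.Reachable ⟨p, h⟩ B) → (∀ h : q ∉ s, H.Reachable ⟨q, h⟩ B) →
      (∀ h : r ∉ s, H.Reachable ⟨r, h⟩ B) → ∀ hv : v ∉ s, H.Reachable ⟨v, hv⟩ B := by
    intro v p q r hd ha hp hq hr hv
    rcases three_avoid hs hd with h | h | h
    · exact (SimpleGraph.Adj.reachable (G := H) (u := ⟨v, hv⟩) (v := ⟨p, h⟩)
        (show gr.Adj v p from ha.1)).trans (hp h)
    · exact (SimpleGraph.Adj.reachable (G := H) (u := ⟨v, hv⟩) (v := ⟨q, h⟩)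
        (show gr.Adj v q from ha.2.1)).trans (hq h)
    · exact (SimpleGraph.Adj.reachable (G := H) (u := ⟨v, hv⟩) (v := ⟨r, h⟩)
        (show gr.Adj v r from ha.2.2)).trans (hr h)
  have b0 := base 0 (by simp)
  have b2 := base 2 (by simp)
  have b3 := base 3 (by simp)
  have b4 := base 4 (by simp)
  have b8 := step 8 2 3 4 (by decide) (by decide) b2 b3 b4
  have b1 := step 1 0 3 4 (by decide) (by decide) b0 b3 b4
  have b9 := step 9 8 3 4 (by decide) (by decide) b8 b3 b4
  have b5 := step 5 0 4 2 (by decide) (by decide) b0 b4 b2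
  have b6 := step 6 0 2 3 (by decide) (by decide) b0 b2 b3
  have b7 := step 7 0 2 5 (by decide) (by decide) b0 b2 b5
  have all : ∀ (v : Fin 10) (hv : v ∉ s), H.Reachable ⟨v, hv⟩ B := by
    intro v
    fin_cases v
    exacts [b0, b1, b2, b3, b4, b5, b6, b7, b8, b9]
  have : Nonempty {v : Fin 10 | v ∉ s} := ⟨B⟩
  exact ⟨fun u v => (all u.1 u.2).trans (all v.1 v.2).symm⟩

/-! ### Straight-line drawings -/

/-- Straight-line drawing with given integer coordinates. -/
noncomputable def straight (q : Fin 10 → ℤ × ℤ) : RawDrawing 10 where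
  pos v := ((q v).1, (q v).2)
  curve u v t := ((1 - t) * (q u).1 + t * (q v).1, (1 - t) * (q u).2 + t * (q v).2)

def orient (a b c : ℤ × ℤ) : ℤ :=
  (b.1 - a.1) * (c.2 - a.2) - (b.2 - a.2) * (c.1 - a.1)

/-- The segment `xy` lies on one side of the line `uv` (and not inside that line). -/
def oneSide (u v x y : ℤ × ℤ) : Bool :=
  (decide (0 ≤ orient u v x) && decide (0 ≤ orient u v y) &&
    decide (0 < orient u v x + orient u v y)) ||
  (decide (orient u v x ≤ 0) && decide (orient u v y ≤ 0) &&
    decide (orient u v x + orient u v y < 0))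

lemma oneSide_disjoint (q : Fin 10 → ℤ × ℤ) (u v x y : Fin 10)
    (h : oneSide (q u) (q v) (q x) (q y) = true) :
    arcInterior ((straight q).curve u v) ∩ arcInterior ((straight q).curve x y) = ∅ := by
  rw [Set.eq_empty_iff_forall_notMem]
  rintro z ⟨⟨t, ht, rfl⟩, ⟨s, hs, he⟩⟩
  simp only [straight, Prod.mk.injEq] at he
  obtain ⟨e1, e2⟩ := he
  have hs0 : 0 < s := hs.1
  have hs1 : 0 < 1 - s := by linarith [hs.2]
  have key : (1 - s) * (orient (q u) (q v) (q x) : ℝ) + s * (orient (q u) (q v) (q y) : ℝ) = 0 := by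
    simp only [orient]
    push_cast
    linear_combination (((q v).1 : ℝ) - (q u).1) * e2 - (((q v).2 : ℝ) - (q u).2) * e1
  simp only [oneSide, Bool.or_eq_true, Bool.and_eq_true, decide_eq_true_eq] at h
  generalize orient (q u) (q v) (q x) = A at *
  generalize orient (q u) (q v) (q y) = C at *
  rcases h with ⟨⟨h1, h2⟩, h3⟩ | ⟨⟨h1, h2⟩, h3⟩
  · have h1' : (0 : ℝ) ≤ A := by exact_mod_cast h1
    have h2' : (0 : ℝ) ≤ C := by exact_mod_cast h2
    have h3' : (0 : ℝ) < A + C := by exact_mod_cast h3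
    have p1 := mul_nonneg hs1.le h1'
    have p2 := mul_nonneg hs0.le h2'
    have z1 : (A : ℝ) = 0 := (mul_eq_zero.1 (le_antisymm (by linarith) p1)).resolve_left hs1.ne'
    have z2 : (C : ℝ) = 0 := (mul_eq_zero.1 (le_antisymm (by linarith) p2)).resolve_left hs0.ne'
    linarith
  · have h1' : (A : ℝ) ≤ 0 := by exact_mod_cast h1
    have h2' : (C : ℝ) ≤ 0 := by exact_mod_cast h2
    have h3' : (A + C : ℝ) < 0 := by exact_mod_cast h3
    have p1 := mul_nonpos_of_nonneg_of_nonpos hs1.le h1'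
    have p2 := mul_nonpos_of_nonneg_of_nonpos hs0.le h2'
    have z1 : (A : ℝ) = 0 := (mul_eq_zero.1 (le_antisymm p1 (by linarith))).resolve_left hs1.ne'
    have z2 : (C : ℝ) = 0 := (mul_eq_zero.1 (le_antisymm p2 (by linarith))).resolve_left hs0.ne'
    linarith

lemma straight_planar (q : Fin 10 → ℤ × ℤ) (m : Fin 10 → Bool) (P : Set Pt)
    (hP : ∀ v, m v = true → (straight q).pos v ∈ P)
    (h1 : ∀ u v, m u = true → m v = true → u ≠ v → q u ≠ q v)
    (h2 : ∀ u v, adjB u v = true → m u = true → m v = true → ∀ w, m w = true →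
      w = u ∨ w = v ∨ orient (q u) (q v) (q w) ≠ 0)
    (h3 : ∀ u v, adjB u v = true → m u = true → m v = true → ∀ x y, adjB x y = true →
      m x = true → m y = true → (u = x ∧ v = y) ∨ (u = y ∧ v = x) ∨
      oneSide (q u) (q v) (q x) (q y) = true ∨ oneSide (q x) (q y) (q u) (q v) = true) :
    IsPlanarDrawingOn 10 gr {v | m v = true} P (straight q) where
  pos_mem v hv := hP v hv
  pos_inj := by
    intro u hu v hv huv
    by_contra hne
    apply h1 u v hu hv hne
    simp only [straight, Prod.mk.injEq, Int.cast_inj] at huv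
    exact Prod.ext huv.1 huv.2
  curve_symm u v := by
    funext t
    simp only [straight, Prod.mk.injEq]
    constructor <;> ring
  arc u hu v hv ha := by
    refine ⟨by simp only [straight]; fun_prop, ?_, by simp [straight], by simp [straight]⟩
    intro s _ t _ hst
    have hne := h1 u v hu hv (gr.ne_of_adj ha)
    simp only [straight, Prod.mk.injEq] at hst
    obtain ⟨e1, e2⟩ := hst
    have f1 : (s - t) * (((q v).1 : ℝ) - (q u).1) = 0 := by linear_combination e1
    have f2 : (s - t) * (((q v).2 : ℝ) - (q u).2) = 0 := by linear_combination e2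
    by_contra hst'
    have hst'' := sub_ne_zero.2 hst'
    apply hne
    have g1 := sub_eq_zero.1 ((mul_eq_zero.1 f1).resolve_left hst'')
    have g2 := sub_eq_zero.1 ((mul_eq_zero.1 f2).resolve_left hst'')
    exact (Prod.ext (by exact_mod_cast g1) (by exact_mod_cast g2)).symm
  vertex_off_arc u hu v hv ha w hw := by
    rintro ⟨t, ht, he⟩
    simp only [straight, Prod.mk.injEq] at he
    obtain ⟨e1, e2⟩ := he
    have hne := h1 u v hu hv (gr.ne_of_adj ha)
    rcases h2 u v ha hu hv w hw with rfl | rfl | ho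
    · apply hne
      have f1 : t * (((q v).1 : ℝ) - (q w).1) = 0 := by linear_combination e1
      have f2 : t * (((q v).2 : ℝ) - (q w).2) = 0 := by linear_combination e2
      have g1 := sub_eq_zero.1 ((mul_eq_zero.1 f1).resolve_left ht.1.ne')
      have g2 := sub_eq_zero.1 ((mul_eq_zero.1 f2).resolve_left ht.1.ne')
      exact (Prod.ext (by exact_mod_cast g1) (by exact_mod_cast g2)).symm
    · apply hne
      have ht1 : (1 - t) ≠ 0 := by linarith [ht.2] |> fun (h : 0 < 1 - t) => h.ne'
      have f1 : (1 - t) * (((q u).1 : ℝ) - (q w).1) = 0 := by linear_combination e1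
      have f2 : (1 - t) * (((q u).2 : ℝ) - (q w).2) = 0 := by linear_combination e2
      have g1 := sub_eq_zero.1 ((mul_eq_zero.1 f1).resolve_left ht1)
      have g2 := sub_eq_zero.1 ((mul_eq_zero.1 f2).resolve_left ht1)
      exact Prod.ext (by exact_mod_cast g1) (by exact_mod_cast g2)
    · apply ho
      have : (orient (q u) (q v) (q w) : ℝ) = 0 := by
        simp only [orient]
        push_cast
        linear_combination (((q v).2 : ℝ) - (q u).2) * e1 - (((q v).1 : ℝ) - (q u).1) * e2
      exact_mod_cast this
  no_cross u hu v hv x hx y hy ha hb hne := by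
    rcases h3 u v ha hu hv x y hb hx hy with ⟨rfl, rfl⟩ | ⟨rfl, rfl⟩ | h | h
    · exact absurd rfl hne
    · exact absurd Sym2.eq_swap hne
    · exact oneSide_disjoint q u v x y h
    · rw [Set.inter_comm]; exact oneSide_disjoint q x y u v h

/-- Coordinates of a straight-line drawing of the whole graph. -/
def coordsG : Fin 10 → ℤ × ℤ :=
  ![(0, -21), (20, -27), (-60, 0), (60, 0), (1, -60), (-20, -29), (3, -7), (-27, -17),
    (2, -200), (21, -87)]

/-- Coordinates for the realization of the story. -/
def coordsR : Fin 10 → ℤ × ℤ :=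
  ![(0, -21), (20, -27), (-60, 0), (60, 0), (1, -60), (-20, -29), (3, -7), (-27, -17),
    (0, -21), (20, -27)]

lemma planar_mono {S T : Set (Fin 10)} {P : Set Pt} {D : RawDrawing 10} (h : S ⊆ T)
    (hT : IsPlanarDrawingOn 10 gr T P D) : IsPlanarDrawingOn 10 gr S P D where
  pos_mem v hv := hT.pos_mem v (h hv)
  pos_inj := hT.pos_inj.mono h
  curve_symm := hT.curve_symm
  arc u hu v hv := hT.arc u (h hu) v (h hv)
  vertex_off_arc u hu v hv ha w hw := hT.vertex_off_arc u (h hu) v (h hv) ha w (h hw)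
  no_cross u hu v hv x hx y hy := hT.no_cross u (h hu) v (h hv) x (h hx) y (h hy)

lemma gr_planar : PlanarGraph 10 gr := by
  refine ⟨straight coordsG, ?_⟩
  have := straight_planar coordsG (fun _ => true) univ (fun _ _ => mem_univ _)
    (by decide +kernel) (by decide +kernel) (by decide +kernel)
  exact planar_mono (fun _ _ => rfl) this

/-- The windows as Boolean predicates. -/
def winB (i : ℕ) (j : Fin 10) : Bool := decide (j.val + 1 ≤ i) && decide (i ≤ j.val + 8)

lemma window_eq (i : ℕ) : window 10 8 i = {v | winB i v = true} := by
  ext v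
  simp [window, winB]

noncomputable def ptsR : Finset Pt := Finset.univ.image (fun v : Fin 8 =>
  (straight coordsR).pos (v.castLE (by norm_num)))

lemma ptsR_card : ptsR.card = 8 + 0 := by
  rw [ptsR, Finset.card_image_of_injective]
  · simp
  · intro u v h
    have hd : ∀ u v : Fin 8, coordsR (u.castLE (by norm_num)) = coordsR (v.castLE (by norm_num)) →
        u = v := by decide +kernel
    apply hd
    simp only [straight, Prod.mk.injEq, Int.cast_inj] at h
    exact Prod.ext h.1 h.2

lemma ptsR_mem (v : Fin 10) : (straight coordsR).pos v ∈ (ptsR : Set Pt) := by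
  have hd : ∀ v : Fin 10, ∃ u : Fin 8, coordsR (u.castLE (by norm_num)) = coordsR v := by
    decide +kernel
  obtain ⟨u, hu⟩ := hd v
  simp only [ptsR, Finset.coe_image, Finset.coe_univ, Set.image_univ, Set.mem_range]
  exact ⟨u, by simp only [straight, hu]⟩

lemma gr_realizable : Realizable 10 8 0 gr := by
  refine ⟨ptsR, ptsR_card, ⟨⟨fun _ => straight coordsR, ?_, fun _ _ _ _ _ => rfl,
    fun _ _ _ _ _ _ _ _ => rfl⟩⟩⟩
  have w8 : IsPlanarDrawingOn 10 gr (window 10 8 8) ptsR (straight coordsR) := by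
    rw [window_eq]
    exact straight_planar coordsR (winB 8) _ (fun v _ => ptsR_mem v)
      (by decide +kernel) (by decide +kernel) (by decide +kernel)
  have w9 : IsPlanarDrawingOn 10 gr (window 10 8 9) ptsR (straight coordsR) := by
    rw [window_eq]
    exact straight_planar coordsR (winB 9) _ (fun v _ => ptsR_mem v)
      (by decide +kernel) (by decide +kernel) (by decide +kernel)
  have w10 : IsPlanarDrawingOn 10 gr (window 10 8 10) ptsR (straight coordsR) := by
    rw [window_eq]
    exact straight_planar coordsR (winB 10) _ (fun v _ => ptsR_mem v)
      (by decide +kernel) (by decide +kernel) (by decide +kernel)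
  intro i hi hi'
  rcases Nat.lt_or_ge 8 i with h | h
  · obtain rfl | rfl : i = 9 ∨ i = 10 := by omega
    · exact w9
    · exact w10
  · refine planar_mono (fun v hv => ?_) w8
    simp only [window, Set.mem_ofPred_eq] at hv ⊢
    omega

/-! ### No supporting embedding -/

/-- The plane as the complex numbers. -/
noncomputable def toC : Pt ≃ₜ ℂ := Complex.equivRealProdCLM.symm.toHomeomorph

/-- The arc of an edge as a curve on the whole real line in the complex plane. -/
noncomputable def ext (γ : ℝ → Pt) (t : ℝ) : ℂ := toC (γ (projIcc (0 : ℝ) 1 zero_le_one t))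

lemma ext_cont {γ : ℝ → Pt} (h : ContinuousOn γ (Icc 0 1)) : Continuous (ext γ) := by
  have h1 : Continuous (fun s : Icc (0 : ℝ) 1 => γ s) :=
    continuousOn_iff_continuous_domRestrict.1 h
  exact toC.continuous.comp (h1.comp continuous_projIcc)

lemma ext_of_mem (γ : ℝ → Pt) {t : ℝ} (ht : t ∈ Icc (0 : ℝ) 1) : ext γ t = toC (γ t) := by
  simp [ext, projIcc_of_mem _ ht]

lemma ext_inj {γ : ℝ → Pt} (h : InjOn γ (Icc 0 1)) : InjOn (ext γ) (Icc 0 1) := by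
  intro s hs t ht hst
  rw [ext_of_mem γ hs, ext_of_mem γ ht] at hst
  exact h hs ht (toC.injective hst)

lemma ext_body (γ : ℝ → Pt) (t : ℝ) : ∃ p ∈ arcBody γ, ext γ t = toC p :=
  ⟨_, ⟨_, (projIcc (0 : ℝ) 1 zero_le_one t).2, rfl⟩, rfl⟩

lemma body_ext {γ : ℝ → Pt} {p : Pt} (hp : p ∈ arcBody γ) : toC p ∈ ext γ '' Icc 0 1 := by
  obtain ⟨s, hs, rfl⟩ := hp
  exact ⟨s, hs, ext_of_mem γ hs⟩

lemma body_cases {D : RawDrawing 10} {u v : Fin 10}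
    (ha : IsArcFrom (D.curve u v) (D.pos u) (D.pos v)) {p : Pt}
    (hp : p ∈ arcBody (D.curve u v)) :
    p = D.pos u ∨ p = D.pos v ∨ p ∈ arcInterior (D.curve u v) := by
  obtain ⟨s, hs, rfl⟩ := hp
  rcases eq_or_lt_of_le hs.1 with h | h
  · left; rw [← h]; exact ha.2.2.1
  · rcases eq_or_lt_of_le hs.2 with h' | h'
    · right; left; rw [h']; exact ha.2.2.2
    · right; right; exact ⟨s, ⟨h, h'⟩, rfl⟩

lemma body_disj {D : RawDrawing 10} (hD : IsPlanarDrawing 10 gr univ D) {u v x y : Fin 10}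
    (h1 : adjB u v = true) (h2 : adjB x y = true)
    (hne : u ≠ x ∧ u ≠ y ∧ v ≠ x ∧ v ≠ y) (s t : ℝ) :
    ext (D.curve u v) s ≠ ext (D.curve x y) t := by
  obtain ⟨p, hp, e1⟩ := ext_body (D.curve u v) s
  obtain ⟨p', hp', e2⟩ := ext_body (D.curve x y) t
  rw [e1, e2]
  intro he
  obtain rfl := toC.injective he
  have inj : ∀ {a b : Fin 10}, D.pos a = D.pos b → a = b := fun h =>
    hD.pos_inj (mem_univ _) (mem_univ _) h
  have m := fun z : Fin 10 => mem_univ z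
  rcases body_cases (hD.arc u (m _) v (m _) h1) hp with q | q | q <;>
    rcases body_cases (hD.arc x (m _) y (m _) h2) hp' with r | r | r
  · exact hne.1 (inj (q.symm.trans r))
  · exact hne.2.1 (inj (q.symm.trans r))
  · rw [q] at r; exact hD.vertex_off_arc x (m _) y (m _) h2 u (m _) r
  · exact hne.2.2.1 (inj (q.symm.trans r))
  · exact hne.2.2.2 (inj (q.symm.trans r))
  · rw [q] at r; exact hD.vertex_off_arc x (m _) y (m _) h2 v (m _) r
  · rw [r] at q; exact hD.vertex_off_arc u (m _) v (m _) h1 x (m _) q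
  · rw [r] at q; exact hD.vertex_off_arc u (m _) v (m _) h1 y (m _) q
  · have := hD.no_cross u (m _) v (m _) x (m _) y (m _) h1 h2 (by
      rw [Ne, Sym2.eq_iff]; tauto)
    exact (Set.eq_empty_iff_forall_notMem.1 this p) ⟨q, r⟩

/-- One direction of the comparison of winding numbers. -/
lemma winding_dvd {D : RawDrawing 10} (hD : IsPlanarDrawing 10 gr univ D)
    (ψ : Homeomorph Pt Pt) (x y : Fin 10) (hxy : ψ (D.pos x) = D.pos y)
    (hx : ∀ u v, adjB u v = true → (u = 2 ∨ u = 3 ∨ u = 4) → (v = 2 ∨ v = 3 ∨ v = 4) →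
      ∀ t, ext (D.curve u v) t ≠ toC (D.pos x))
    (hy : ∀ u v, adjB u v = true → (u = 2 ∨ u = 3 ∨ u = 4) → (v = 2 ∨ v = 3 ∨ v = 4) →
      ∀ t, ext (D.curve u v) t ≠ toC (D.pos y))
    (hv : ∀ u, (u = 2 ∨ u = 3 ∨ u = 4) → ψ (D.pos u) = D.pos u)
    (he : ∀ u v, adjB u v = true → (u = 2 ∨ u = 3 ∨ u = 4) → (v = 2 ∨ v = 3 ∨ v = 4) →
      ψ '' arcBody (D.curve u v) = arcBody (D.curve u v)) (m m' : ℤ)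
    (hm : chg (ext (D.curve 2 3)) (toC (D.pos x)) + chg (ext (D.curve 3 4)) (toC (D.pos x))
      + chg (ext (D.curve 4 2)) (toC (D.pos x)) = m * (2 * Real.pi * Complex.I))
    (hm' : chg (ext (D.curve 2 3)) (toC (D.pos y)) + chg (ext (D.curve 3 4)) (toC (D.pos y))
      + chg (ext (D.curve 4 2)) (toC (D.pos y)) = m' * (2 * Real.pi * Complex.I)) :
    m ∣ m' := by
  let Ψ : ℂ → ℂ := fun z => toC (ψ (toC.symm z))
  have cΨ : Continuous Ψ := by fun_prop
  have iΨ : Function.Injective Ψ :=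
    toC.injective.comp (ψ.injective.comp toC.symm.injective)
  have hΨ : ∀ p, Ψ (toC p) = toC (ψ p) := fun p => by simp [Ψ]
  have arc : ∀ u v, adjB u v = true → IsArcFrom (D.curve u v) (D.pos u) (D.pos v) :=
    fun u v h => hD.arc u (mem_univ _) v (mem_univ _) h
  have e0 : ∀ u v, adjB u v = true → ext (D.curve u v) 0 = toC (D.pos u) := fun u v h => by
    rw [ext_of_mem _ (by simp), (arc u v h).2.2.1]
  have e1 : ∀ u v, adjB u v = true → ext (D.curve u v) 1 = toC (D.pos v) := fun u v h => by
    rw [ext_of_mem _ (by simp), (arc u v h).2.2.2]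
  have cc : ∀ u v, adjB u v = true → Continuous (ext (D.curve u v)) := fun u v h =>
    ext_cont (arc u v h).1
  have a23 : adjB 2 3 = true := by decide
  have a34 : adjB 3 4 = true := by decide
  have a42 : adjB 4 2 = true := by decide
  have rep : ∀ u v, adjB u v = true → (u = 2 ∨ u = 3 ∨ u = 4) → (v = 2 ∨ v = 3 ∨ v = 4) →
      chg (Ψ ∘ ext (D.curve u v)) (Ψ (toC (D.pos x))) = chg (ext (D.curve u v)) (toC (D.pos y)) := by
    intro u v h hu hv'
    rw [hΨ, hxy]
    refine chg_reparam (cc u v h) (ext_inj (arc u v h).2.1) (cΨ.comp (cc u v h)) ?_ ?_ ?_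
      (hy u v h hu hv')
    · intro t
      obtain ⟨p, hp, ep⟩ := ext_body (D.curve u v) t
      simp only [Function.comp_apply, ep, hΨ]
      apply body_ext
      rw [← he u v h hu hv']
      exact ⟨p, hp, rfl⟩
    · simp only [Function.comp_apply, e0 u v h, hΨ, hv u hu]
    · simp only [Function.comp_apply, e1 u v h, hΨ, hv v hv']
  obtain ⟨k, hk⟩ := homeo_winding Ψ cΨ iΨ (toC (D.pos x)) _ _ _ (cc 2 3 a23) (cc 3 4 a34)
    (cc 4 2 a42) (hx 2 3 a23 (by simp) (by simp)) (hx 3 4 a34 (by simp) (by simp))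
    (hx 4 2 a42 (by simp) (by simp)) (by rw [e1 2 3 a23, e0 3 4 a34])
    (by rw [e1 3 4 a34, e0 4 2 a42]) m hm
  rw [rep 2 3 a23 (by simp) (by simp), rep 3 4 a34 (by simp) (by simp),
    rep 4 2 a42 (by simp) (by simp), hm'] at hk
  have := mul_right_cancel₀ Complex.two_pi_I_ne_zero hk
  exact ⟨k, by rw [mul_comm]; exact_mod_cast this⟩

lemma no_swap {D : RawDrawing 10} (hD : IsPlanarDrawing 10 gr univ D)
    (ψ : Homeomorph Pt Pt) (hxy : ψ (D.pos 0) = D.pos 8)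
    (hv : ∀ u, (u = 2 ∨ u = 3 ∨ u = 4) → ψ (D.pos u) = D.pos u)
    (he : ∀ u v, adjB u v = true → (u = 2 ∨ u = 3 ∨ u = 4) → (v = 2 ∨ v = 3 ∨ v = 4) →
      ψ '' arcBody (D.curve u v) = arcBody (D.curve u v)) : False := by
  have arc : ∀ u v, adjB u v = true → IsArcFrom (D.curve u v) (D.pos u) (D.pos v) :=
    fun u v h => hD.arc u (mem_univ _) v (mem_univ _) h
  have e0 : ∀ u v, adjB u v = true → ext (D.curve u v) 0 = toC (D.pos u) := fun u v h => by
    rw [ext_of_mem _ (by simp), (arc u v h).2.2.1]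
  have e1 : ∀ u v, adjB u v = true → ext (D.curve u v) 1 = toC (D.pos v) := fun u v h => by
    rw [ext_of_mem _ (by simp), (arc u v h).2.2.2]
  have cc : ∀ u v, adjB u v = true → Continuous (ext (D.curve u v)) := fun u v h =>
    ext_cont (arc u v h).1
  have ne : ∀ u v : Fin 10, u ≠ v → toC (D.pos u) ≠ toC (D.pos v) := fun u v h h' =>
    h (hD.pos_inj (mem_univ _) (mem_univ _) (toC.injective h'))
  have off : ∀ z : Fin 10, (z = 0 ∨ z = 8) → ∀ u v, adjB u v = true →
      (u = 2 ∨ u = 3 ∨ u = 4) → (v = 2 ∨ v = 3 ∨ v = 4) →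
      ∀ t, ext (D.curve u v) t ≠ toC (D.pos z) := by
    intro z hz u v h hu hv' t
    obtain ⟨w, hw, hwu, hwv, hzu, hzv⟩ : ∃ w : Fin 10, adjB z w = true ∧ w ≠ u ∧ w ≠ v ∧
        z ≠ u ∧ z ≠ v := by
      have hd : ∀ z u v : Fin 10, (z = 0 ∨ z = 8) ∧ (u = 2 ∨ u = 3 ∨ u = 4) ∧
          (v = 2 ∨ v = 3 ∨ v = 4) ∧ adjB u v = true → ∃ w : Fin 10, adjB z w = true ∧
          w ≠ u ∧ w ≠ v ∧ z ≠ u ∧ z ≠ v := by decide +kernel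
      exact hd z u v ⟨hz, hu, hv', h⟩
    rw [← e0 z w hw]
    exact body_disj hD h hw ⟨hzu.symm, hwu.symm, hzv.symm, hwv.symm⟩ t 0
  have integral : ∀ z : Fin 10, (z = 0 ∨ z = 8) → ∃ m : ℤ,
      chg (ext (D.curve 2 3)) (toC (D.pos z)) + chg (ext (D.curve 3 4)) (toC (D.pos z))
      + chg (ext (D.curve 4 2)) (toC (D.pos z)) = m * (2 * Real.pi * Complex.I) := by
    intro z hz
    rw [← Complex.exp_eq_one_iff, Complex.exp_add, Complex.exp_add,
      exp_chg (cc 2 3 (by decide)) (off z hz 2 3 (by decide) (by simp) (by simp)),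
      exp_chg (cc 3 4 (by decide)) (off z hz 3 4 (by decide) (by simp) (by simp)),
      exp_chg (cc 4 2 (by decide)) (off z hz 4 2 (by decide) (by simp) (by simp)),
      e0 2 3 (by decide), e1 2 3 (by decide), e0 3 4 (by decide), e1 3 4 (by decide),
      e0 4 2 (by decide), e1 4 2 (by decide)]
    have n2 := sub_ne_zero.2 (ne 2 z (by rcases hz with rfl | rfl <;> decide))
    have n3 := sub_ne_zero.2 (ne 3 z (by rcases hz with rfl | rfl <;> decide))
    have n4 := sub_ne_zero.2 (ne 4 z (by rcases hz with rfl | rfl <;> decide))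
    field_simp
  obtain ⟨m, hm⟩ := integral 0 (by simp)
  obtain ⟨m', hm'⟩ := integral 8 (by simp)
  have d1 : m ∣ m' := winding_dvd hD ψ 0 8 hxy (off 0 (by simp)) (off 8 (by simp)) hv he m m' hm hm'
  have d2 : m' ∣ m := winding_dvd hD ψ.symm 8 0 (by rw [← hxy]; simp) (off 8 (by simp))
    (off 0 (by simp)) (fun u hu => by rw [Homeomorph.symm_apply_eq, hv u hu])
    (fun u v h hu hv' => by
      conv_lhs => rw [← he u v h hu hv']
      rw [← Set.image_comp]; simp) m' m hm' hm
  obtain ⟨S, hS, hSum⟩ := k5_identity (toC (D.pos 0)) (toC (D.pos 8)) (toC (D.pos 2))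
    (toC (D.pos 3)) (toC (D.pos 4)) (ext (D.curve 2 3)) (ext (D.curve 3 4)) (ext (D.curve 4 2))
    (ext (D.curve 0 2)) (ext (D.curve 0 3)) (ext (D.curve 0 4))
    (ext (D.curve 8 2)) (ext (D.curve 8 3)) (ext (D.curve 8 4))
    (cc _ _ (by decide)) (cc _ _ (by decide)) (cc _ _ (by decide))
    (cc _ _ (by decide)) (cc _ _ (by decide)) (cc _ _ (by decide))
    (cc _ _ (by decide)) (cc _ _ (by decide)) (cc _ _ (by decide))
    (e0 _ _ (by decide)) (e1 _ _ (by decide)) (e0 _ _ (by decide)) (e1 _ _ (by decide))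
    (e0 _ _ (by decide)) (e1 _ _ (by decide)) (e0 _ _ (by decide)) (e1 _ _ (by decide))
    (e0 _ _ (by decide)) (e1 _ _ (by decide)) (e0 _ _ (by decide)) (e1 _ _ (by decide))
    (e0 _ _ (by decide)) (e1 _ _ (by decide)) (e0 _ _ (by decide)) (e1 _ _ (by decide))
    (e0 _ _ (by decide)) (e1 _ _ (by decide))
    (body_disj hD (by decide) (by decide) (by decide))
    (body_disj hD (by decide) (by decide) (by decide))
    (body_disj hD (by decide) (by decide) (by decide))
    (body_disj hD (by decide) (by decide) (by decide))
    (body_disj hD (by decide) (by decide) (by decide))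
    (body_disj hD (by decide) (by decide) (by decide))
    (body_disj hD (by decide) (by decide) (by decide))
    (body_disj hD (by decide) (by decide) (by decide))
    (body_disj hD (by decide) (by decide) (by decide))
    (body_disj hD (by decide) (by decide) (by decide))
    (body_disj hD (by decide) (by decide) (by decide))
    (body_disj hD (by decide) (by decide) (by decide))
    (ne _ _ (by decide)) (ne _ _ (by decide)) (ne _ _ (by decide))
  rw [hm, hm'] at hSum
  rcases Int.natAbs_eq_natAbs_iff.1 (Int.natAbs_eq_of_dvd_dvd d1 d2) with h | h
  · have : S = m' * (2 * Real.pi * Complex.I) := by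
      rw [h] at hSum
      linear_combination -hSum / 2
    rw [this, Complex.exp_int_mul_two_pi_mul_I] at hS
    norm_num at hS
  · have : S = 0 := by
      rw [h] at hSum
      push_cast at hSum
      linear_combination -hSum / 2
    rw [this, Complex.exp_zero] at hS
    norm_num at hS

lemma gr_no_support : ¬ ∃ Δ : RawDrawing 10, IsSupportingDrawing 10 8 gr Δ := by
  rintro ⟨Δ, hΔ, P, hP, R, hR⟩
  obtain ⟨φ, φv, φe, -⟩ := hR 8 (by norm_num) (by norm_num)
  obtain ⟨θ, θv, θe, -⟩ := hR 9 (by norm_num) (by norm_num)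
  have mem8 : ∀ j : Fin 10, j.val ≤ 7 → j ∈ window 10 8 8 := fun j hj => by
    simp only [window, Set.mem_ofPred_eq]; omega
  have mem9 : ∀ j : Fin 10, 1 ≤ j.val → j.val ≤ 8 → j ∈ window 10 8 9 := fun j hj hj' => by
    simp only [window, Set.mem_ofPred_eq]; omega
  have p8 := R.planar 8 (by norm_num) (by norm_num)
  have p9 := R.planar 9 (by norm_num) (by norm_num)
  have peq : ∀ j : Fin 10, 1 ≤ j.val → j.val ≤ 7 → (R.Γ 9).pos j = (R.Γ 8).pos j :=
    fun j h1 h2 => R.pos_eq 9 (by norm_num) (by norm_num) j ⟨mem8 j h2, mem9 j h1 (by omega)⟩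
  -- the vertex entering at time nine takes the place of the first vertex
  have swap : (R.Γ 9).pos 8 = (R.Γ 8).pos 0 := by
    let f : Fin 8 → Pt := fun j => (R.Γ 8).pos (j.castLE (by norm_num))
    have fi : Function.Injective f := fun i j h => by
      have := p8.pos_inj (mem8 _ (by simp; omega)) (mem8 _ (by simp; omega)) h
      simpa using this
    have himg : Finset.univ.image f = P := by
      apply Finset.eq_of_subset_of_card_le
      · intro z hz
        obtain ⟨j, -, rfl⟩ := Finset.mem_image.1 hz
        exact p8.pos_mem _ (mem8 _ (by simp; omega))
      · rw [hP, Finset.card_image_of_injective _ fi]; simp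
    have h8 : (R.Γ 9).pos 8 ∈ P := p9.pos_mem 8 (mem9 8 (by decide) (by decide))
    have h8' := (Finset.ext_iff.1 himg _).2 h8
    obtain ⟨j, -, hj⟩ := Finset.mem_image.1 h8'
    by_cases hj0 : j = 0
    · rw [← hj, hj0]; rfl
    · exfalso
      have hj1 : 1 ≤ j.val := Nat.one_le_iff_ne_zero.2 (fun h => hj0 (Fin.ext h))
      have h2 : (R.Γ 9).pos (j.castLE (by norm_num)) = (R.Γ 9).pos 8 := by
        rw [peq _ hj1 (by simp; omega)]; exact hj
      have h3 := p9.pos_inj (mem9 _ hj1 (by simp)) (mem9 8 (by decide) (by decide)) h2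
      have h4 := congrArg Fin.val h3
      simp at h4
      omega
  have small : ∀ u : Fin 10, (u = 2 ∨ u = 3 ∨ u = 4) → 1 ≤ u.val ∧ u.val ≤ 7 := by
    decide
  refine no_swap hΔ (φ.trans θ.symm) ?_ ?_ ?_
  · rw [Homeomorph.trans_apply, Homeomorph.symm_apply_eq, φv 0 (mem8 0 (by decide)),
      θv 8 (mem9 8 (by decide) (by decide)), swap]
  · intro u hu
    obtain ⟨a, b⟩ := small u hu
    rw [Homeomorph.trans_apply, Homeomorph.symm_apply_eq, φv u (mem8 u b),
      θv u (mem9 u a (by omega)), peq u a b]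
  · intro u v h hu hv
    obtain ⟨a, b⟩ := small u hu
    obtain ⟨a', b'⟩ := small v hv
    have c := R.curve_eq 9 (by norm_num) (by norm_num) u ⟨mem8 u b, mem9 u a (by omega)⟩
      v ⟨mem8 v b', mem9 v a' (by omega)⟩ h
    have hφ := φe u (mem8 u b) v (mem8 v b') h
    have hθ := θe u (mem9 u a (by omega)) v (mem9 v a' (by omega)) h
    have hc : arcBody ((R.Γ 9).curve u v) = arcBody ((R.Γ 8).curve u v) := by rw [c]
    have : ⇑(φ.trans θ.symm) = θ.symm ∘ φ := rfl
    rw [this, Set.image_comp, hφ, ← hc, ← hθ, ← Set.image_comp]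
    simp

/-- **Lemma 2.** There exists a minimal graph story
`S = (G, ω, τ)` such that (i) `G` is planar, (ii) `S` is realizable, and
(iii) `S` does not admit a supporting embedding.  This holds in particular for
a triconnected planar graph on `10` vertices with `ω = 8`. -/
theorem exists_realizable_story_without_supporting_embedding :
    ∃ G : SimpleGraph (Fin 10),
      Visible 10 8 G ∧
      ThreeConnected 10 G ∧
      PlanarGraph 10 G ∧
      Realizable 10 8 0 G ∧
      ¬ ∃ Δ : RawDrawing 10, IsSupportingDrawing 10 8 G Δ := by
  exact ⟨gr, gr_visible, gr_three, gr_planar, gr_realizable, gr_no_support⟩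

end GraphStories
end

section
/- A graph story S = (G, ω, k, τ) is realizable if and only if there exists a sequence ⟨φ_ω, φ_{ω+1}, ..., φ_n⟩ of face-k-weighted planar embeddings of the graphs ⟨G_ω, G_{ω+1}, ..., G_n⟩ such that φ_{i−1} and φ_i are compatible for every i with ω+1 ≤ i ≤ n. -/
open Set

namespace GraphStories

/-! ### Helper lemmas -/

lemma mid_path (p a b : Pt) (r : ℝ) (ha : dist a p ≤ r) (hb : dist b p ≤ r)
    (hap : a ≠ p) (hbp : b ≠ p) (hab : a ≠ b) :
    ∃ σ : ℝ → Pt, ContinuousOn σ (Icc 0 1) ∧ InjOn σ (Icc 0 1) ∧ σ 0 = a ∧ σ 1 = b ∧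
      ∀ s ∈ Icc (0:ℝ) 1, dist (σ s) p ≤ r ∧ σ s ≠ p := by
  by_cases hp : ∃ s ∈ Icc (0:ℝ) 1, a + s • (b - a) = p
  · obtain ⟨s, ⟨hs0, hs1⟩, hs⟩ := hp
    have hs0' : 0 < s := by
      rcases hs0.lt_or_eq with h | h
      · exact h
      · exfalso; apply hap; rw [← hs, ← h]; simp
    have hs1' : s < 1 := by
      rcases hs1.lt_or_eq with h | h
      · exact h
      · exfalso; apply hbp; rw [← hs, h]; simp
    obtain ⟨a1, a2⟩ := a
    obtain ⟨b1, b2⟩ := b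
    obtain ⟨p1, p2⟩ := p
    simp only [Prod.dist_eq, Real.dist_eq, max_le_iff, abs_le, Prod.mk.injEq, Prod.smul_mk,
      Prod.mk_sub_mk, Prod.mk_add_mk, smul_eq_mul, ne_eq] at *
    obtain ⟨h1, h2⟩ := hs
    set d1 := a1 - p1 with hd1
    set d2 := a2 - p2 with hd2
    have hN : 0 < d1 ^ 2 + d2 ^ 2 := by
      by_contra hcon
      apply hap
      constructor <;> nlinarith [sq_nonneg d1, sq_nonneg d2]
    obtain ⟨μ, hμ, hμs⟩ : ∃ μ : ℝ, 0 < μ ∧ μ * s = 1 - s :=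
      ⟨(1 - s) / s, div_pos (by linarith) hs0', by field_simp⟩
    have e1 : b1 - p1 = - μ * d1 := by
      have : s * (b1 - p1) = s * (- μ * d1) := by
        rw [hd1]; linear_combination h1 + (a1 - p1) * hμs
      exact mul_left_cancel₀ hs0'.ne' this
    have e2 : b2 - p2 = - μ * d2 := by
      have : s * (b2 - p2) = s * (- μ * d2) := by
        rw [hd2]; linear_combination h2 + (a2 - p2) * hμs
      exact mul_left_cancel₀ hs0'.ne' this
    have hbb1 : b1 = p1 - μ * d1 := by linarith
    have hbb2 : b2 = p2 - μ * d2 := by linarith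
    have haa1 : a1 = p1 + d1 := by rw [hd1]; ring
    have haa2 : a2 = p2 + d2 := by rw [hd2]; ring
    refine ⟨fun t => (p1 + (((1-t)^2 - μ * t^2) * d1 - 2*t*(1-t) * d2),
      p2 + (((1-t)^2 - μ * t^2) * d2 + 2*t*(1-t) * d1)), by fun_prop, ?_, ?_, ?_, ?_⟩
    · intro t ht t' ht' h
      simp only [Prod.mk.injEq] at h
      obtain ⟨h1, h2⟩ := h
      have h3 : ((1-t)^2 - μ * t^2) - ((1-t')^2 - μ * t'^2) = 0 := by
        have : (d1^2+d2^2) * (((1-t)^2 - μ * t^2) - ((1-t')^2 - μ * t'^2)) = 0 := by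
          linear_combination d1 * h1 + d2 * h2
        rcases mul_eq_zero.1 this with h | h
        · exact absurd h hN.ne'
        · exact h
      by_contra hne
      have h4 : (t' - t) * ((2 - t - t') + μ * (t + t')) = 0 := by linear_combination h3
      rcases mul_eq_zero.1 h4 with h | h
      · apply hne; linarith
      · obtain ⟨q1, q2⟩ := ht
        obtain ⟨q3, q4⟩ := ht'
        have q5 : 0 ≤ μ * (t + t') := mul_nonneg hμ.le (by linarith)
        have q6 : t = 1 := by linarith
        have q7 : t' = 1 := by linarith
        apply hne; rw [q6, q7]
    · simp only [Prod.mk.injEq]; constructor <;> linarith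
    · simp only [Prod.mk.injEq]; constructor <;> linarith
    · rintro t ⟨ht0, ht1⟩
      have c0 : 0 ≤ (1 - t)^2 := sq_nonneg _
      have c1 : 0 ≤ 2 * t * (1 - t) := mul_nonneg (by linarith) (by linarith)
      have c2 : 0 ≤ t ^ 2 := sq_nonneg _
      rw [e1, e2] at hb
      obtain ⟨⟨u1, u2⟩, u3, u4⟩ := ha
      obtain ⟨⟨w1, w2⟩, w3, w4⟩ := hb
      refine ⟨⟨⟨?_, ?_⟩, ?_, ?_⟩, ?_⟩
      · nlinarith [mul_le_mul_of_nonneg_left u1 c0, mul_le_mul_of_nonneg_left u4 c1,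
          mul_le_mul_of_nonneg_left w1 c2]
      · nlinarith [mul_le_mul_of_nonneg_left u2 c0, mul_le_mul_of_nonneg_left u3 c1,
          mul_le_mul_of_nonneg_left w2 c2]
      · nlinarith [mul_le_mul_of_nonneg_left u3 c0, mul_le_mul_of_nonneg_left u1 c1,
          mul_le_mul_of_nonneg_left w3 c2]
      · nlinarith [mul_le_mul_of_nonneg_left u4 c0, mul_le_mul_of_nonneg_left u2 c1,
          mul_le_mul_of_nonneg_left w4 c2]
      · intro h12
        rw [Prod.mk.injEq] at h12
        obtain ⟨h1, h2⟩ := h12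
        have h3 : (1-t)^2 - μ * t^2 = 0 := by
          have : (d1^2+d2^2) * ((1-t)^2 - μ * t^2) = 0 := by
            linear_combination d1 * h1 + d2 * h2
          rcases mul_eq_zero.1 this with h | h
          · exact absurd h hN.ne'
          · exact h
        have h4 : 2 * t * (1-t) = 0 := by
          have : (d1^2+d2^2) * (2 * t * (1-t)) = 0 := by
            linear_combination d1 * h2 - d2 * h1
          rcases mul_eq_zero.1 this with h | h
          · exact absurd h hN.ne'
          · exact h
        rcases mul_eq_zero.1 h4 with h | h
        · have : t = 0 := by linarith
          rw [this] at h3; norm_num at h3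
        · have : t = 1 := by linarith
          rw [this] at h3
          norm_num at h3
          exact hμ.ne' h3
  · push Not at hp
    refine ⟨fun t => a + t • (b - a), by fun_prop, ?_, by simp, by simp, ?_⟩
    · intro t _ t' _ h
      simp only [add_right_inj] at h
      exact smul_left_injective ℝ (sub_ne_zero.2 hab.symm) h
    · intro t ht
      refine ⟨?_, hp t ht⟩
      exact (convex_closedBall p r).add_smul_sub_mem (Metric.mem_closedBall.2 ha)
        (Metric.mem_closedBall.2 hb) ht

lemma detour (γ : ℝ → Pt) (a b p : Pt) (h : IsArcFrom γ a b) (hp : p ∈ arcInterior γ)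
    (r : ℝ) (hr : 0 < r) (har : r < dist a p) (hbr : r < dist b p) :
    ∃ γ' : ℝ → Pt, IsArcFrom γ' a b ∧ p ∉ arcInterior γ' ∧
      arcInterior γ' ⊆ arcInterior γ ∪ Metric.closedBall p r := by
  obtain ⟨hc, hi, h0, h1⟩ := h
  obtain ⟨τ, ⟨hτ0, hτ1⟩, hτ⟩ := hp
  have hdc : ContinuousOn (fun t => dist (γ t) p) (Icc 0 1) := 
    (continuous_id.dist continuous_const : Continuous fun x : Pt => dist x p).comp_continuousOn hc
  -- the set of times in the ball
  set A : Set ℝ := Icc 0 1 ∩ (fun t => dist (γ t) p) ⁻¹' Iic r with hA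
  have hAc : IsCompact A := by
    apply isCompact_Icc.of_isClosed_subset _ inter_subset_left
    exact hdc.preimage_isClosed_of_isClosed isClosed_Icc isClosed_Iic
  have hAτ : τ ∈ A := ⟨⟨hτ0.le, hτ1.le⟩, by simp [hτ, hr.le]⟩
  obtain ⟨t0, ht0A, ht0⟩ := hAc.exists_isLeast ⟨τ, hAτ⟩
  obtain ⟨t1, ht1A, ht1⟩ := hAc.exists_isGreatest ⟨τ, hAτ⟩
  have hlt0 : t0 < τ := by
    have : r ∈ (fun t => dist (γ t) p) '' Icc 0 τ := by
      apply intermediate_value_Icc' hτ0.le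
        (hdc.mono (Icc_subset_Icc le_rfl hτ1.le))
      simp [hτ, h0, hr.le, har.le]
    obtain ⟨t, ⟨hta, htb⟩, hte⟩ := this
    have hne : t ≠ τ := by
      rintro rfl
      simp [hτ] at hte
      exact hr.ne hte
    exact lt_of_le_of_lt (ht0 ⟨⟨hta, htb.trans hτ1.le⟩, hte.le⟩) (lt_of_le_of_ne htb hne)
  have hlt1 : τ < t1 := by
    have : r ∈ (fun t => dist (γ t) p) '' Icc τ 1 := by
      apply intermediate_value_Icc hτ1.le
        (hdc.mono (Icc_subset_Icc hτ0.le le_rfl))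
      simp [hτ, h1, hr.le, hbr.le]
    obtain ⟨t, ⟨hta, htb⟩, hte⟩ := this
    have hne : τ ≠ t := by
      rintro rfl
      simp [hτ] at hte
      exact hr.ne hte
    exact lt_of_lt_of_le (lt_of_le_of_ne hta hne) (ht1 ⟨⟨hτ0.le.trans hta, htb⟩, hte.le⟩)
  have h00 : 0 < t0 := by
    rcases ht0A.1.1.lt_or_eq with h | h
    · exact h
    · have := ht0A.2
      simp only [mem_preimage, mem_Iic, ← h, h0] at this
      linarith
  have h11 : t1 < 1 := by
    rcases ht1A.1.2.lt_or_eq with h | h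
    · exact h
    · have := ht1A.2
      simp only [mem_preimage, mem_Iic, h, h1] at this
      linarith
  have hτm : τ ∈ Icc (0:ℝ) 1 := ⟨hτ0.le, hτ1.le⟩
  have g0 : γ t0 ≠ p := fun h => hlt0.ne (hi ht0A.1 hτm (h.trans hτ.symm))
  have g1 : γ t1 ≠ p := fun h => hlt1.ne' (hi ht1A.1 hτm (h.trans hτ.symm))
  have g01 : γ t0 ≠ γ t1 := fun h => (hlt0.trans hlt1).ne (hi ht0A.1 ht1A.1 h)
  obtain ⟨σ, σc, σi, σ0, σ1, σb⟩ := mid_path p (γ t0) (γ t1) r ht0A.2 ht1A.2 g0 g1 g01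
  have hd : 0 < t1 - t0 := by linarith
  let γ' : ℝ → Pt := fun t => if t ≤ t0 ∨ t1 ≤ t then γ t else σ ((t - t0) / (t1 - t0))
  have hout : ∀ t, t ≤ t0 ∨ t1 ≤ t → γ' t = γ t := fun t ht => if_pos ht
  have hin : ∀ t, t0 ≤ t → t ≤ t1 → γ' t = σ ((t - t0) / (t1 - t0)) := by
    intro t hta htb
    by_cases h : t ≤ t0 ∨ t1 ≤ t
    · rw [hout t h]
      rcases h with h | h
      · have : t = t0 := le_antisymm h hta
        subst this; simp [σ0]
      · have : t = t1 := le_antisymm htb h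
        subst this; rw [div_self hd.ne', σ1]
    · exact if_neg h
  have hm : ∀ t, t0 ≤ t → t ≤ t1 → (t - t0) / (t1 - t0) ∈ Icc (0:ℝ) 1 := by
    intro t hta htb
    exact ⟨div_nonneg (by linarith) hd.le, (div_le_one hd).2 (by linarith)⟩
  have hfar : ∀ t ∈ Icc (0:ℝ) 1, t < t0 ∨ t1 < t → r < dist (γ t) p := by
    intro t ht h
    by_contra hcon
    have hA' : t ∈ A := ⟨ht, not_lt.1 hcon⟩
    rcases h with h | h
    · exact absurd (ht0 hA') (not_le.2 h)
    · exact absurd (ht1 hA') (not_le.2 h)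
  have hcases : ∀ t, (t < t0 ∨ t1 < t) ∨ (t0 ≤ t ∧ t ≤ t1) := by
    intro t
    rcases lt_or_ge t t0 with h | h
    · exact Or.inl (Or.inl h)
    · rcases lt_or_ge t1 t with h' | h'
      · exact Or.inl (Or.inr h')
      · exact Or.inr ⟨h, h'⟩
  refine ⟨γ', ⟨?_, ?_, ?_, ?_⟩, ?_, ?_⟩
  · have e : Icc (0:ℝ) 1 = (Icc 0 t0 ∪ Icc t0 t1) ∪ Icc t1 1 := by
      rw [Icc_union_Icc_eq_Icc h00.le (hlt0.trans hlt1).le,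
        Icc_union_Icc_eq_Icc (h00.le.trans (hlt0.trans hlt1).le) h11.le]
    rw [e]
    refine ContinuousOn.union_of_isClosed (ContinuousOn.union_of_isClosed ?_ ?_ isClosed_Icc
      isClosed_Icc) ?_ (isClosed_Icc.union isClosed_Icc) isClosed_Icc
    · exact (hc.mono (Icc_subset_Icc le_rfl ht0A.1.2)).congr fun t ht => hout t (Or.inl ht.2)
    · refine ContinuousOn.congr ?_ fun t ht => hin t ht.1 ht.2
      refine σc.comp (f := fun t => (t - t0) / (t1 - t0)) (by fun_prop) ?_
      intro t ht
      exact hm t ht.1 ht.2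
    · exact (hc.mono (Icc_subset_Icc ht1A.1.1 le_rfl)).congr fun t ht => hout t (Or.inr ht.1)
  · have aux : ∀ t ∈ Icc (0:ℝ) 1, ∀ s ∈ Icc (0:ℝ) 1, (t < t0 ∨ t1 < t) → (t0 ≤ s ∧ s ≤ t1) →
        γ' t ≠ γ' s := by
      intro t ht s hs h h' he
      rw [hout t (h.imp le_of_lt le_of_lt), hin s h'.1 h'.2] at he
      have := hfar t ht h
      rw [he] at this
      exact absurd (σb _ (hm s h'.1 h'.2)).1 (not_le.2 this)
    intro t ht s hs he
    rcases hcases t with h | h <;> rcases hcases s with h' | h'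
    · rw [hout t (h.imp le_of_lt le_of_lt), hout s (h'.imp le_of_lt le_of_lt)] at he
      exact hi ht hs he
    · exact absurd he (aux t ht s hs h h')
    · exact absurd he.symm (aux s hs t ht h' h)
    · rw [hin t h.1 h.2, hin s h'.1 h'.2] at he
      have := σi (hm t h.1 h.2) (hm s h'.1 h'.2) he
      rw [div_left_inj' hd.ne'] at this
      linarith
  · rw [hout 0 (Or.inl h00.le), h0]
  · rw [hout 1 (Or.inr h11.le), h1]
  · rintro ⟨t, ht, he⟩
    rcases hcases t with h | h
    · have := hfar t (Ioo_subset_Icc_self ht) h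
      rw [hout t (h.imp le_of_lt le_of_lt)] at he
      rw [he, dist_self] at this
      linarith
    · rw [hin t h.1 h.2] at he
      exact (σb _ (hm t h.1 h.2)).2 he
  · rintro x ⟨t, ht, rfl⟩
    rcases hcases t with h | h
    · left
      rw [hout t (h.imp le_of_lt le_of_lt)]
      exact ⟨t, ht, rfl⟩
    · right
      rw [hin t h.1 h.2]
      exact (σb _ (hm t h.1 h.2)).1

lemma detour_all (γ : ℝ → Pt) (a b : Pt) (h : IsArcFrom γ a b) (r : ℝ) (hr : 0 < r)
    (Q : Finset Pt) (hQ : ∀ p ∈ Q, ∀ q ∈ Q, p ≠ q → q ∉ Metric.closedBall p r)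
    (ha : ∀ q ∈ Q, r < dist a q) (hb : ∀ q ∈ Q, r < dist b q) :
    ∃ γ' : ℝ → Pt, IsArcFrom γ' a b ∧ (∀ q ∈ Q, q ∉ arcInterior γ') ∧
      arcInterior γ' ⊆ arcInterior γ ∪ ⋃ q ∈ Q, Metric.closedBall q r := by
  classical
  induction Q using Finset.induction_on with
  | empty => exact ⟨γ, h, by simp, by simp⟩
  | insert q Q hq ih =>
    obtain ⟨γ₁, k1, k2, k3⟩ := ih
      (fun p hp q hq => hQ p (Finset.mem_insert_of_mem hp) q (Finset.mem_insert_of_mem hq))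
      (fun p hp => ha p (Finset.mem_insert_of_mem hp))
      (fun p hp => hb p (Finset.mem_insert_of_mem hp))
    have hsub : (⋃ p ∈ Q, Metric.closedBall p r) ⊆
        ⋃ p ∈ insert q Q, Metric.closedBall p r := by
      apply biUnion_subset_biUnion_left
      intro p hp
      exact Finset.mem_insert_of_mem hp
    by_cases hq1 : q ∈ arcInterior γ₁
    · obtain ⟨γ₂, l1, l2, l3⟩ := detour γ₁ a b q k1 hq1 r hr
        (ha q (Finset.mem_insert_self _ _)) (hb q (Finset.mem_insert_self _ _))
      refine ⟨γ₂, l1, ?_, ?_⟩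
      · intro p hp
        rcases Finset.mem_insert.1 hp with rfl | hp'
        · exact l2
        · intro hx
          rcases l3 hx with hx | hx
          · exact k2 p hp' hx
          · refine hQ q (Finset.mem_insert_self _ _) p hp ?_ hx
            rintro rfl
            exact hq hp'
      · intro x hx
        rcases l3 hx with hx | hx
        · rcases k3 hx with hx | hx
          · exact Or.inl hx
          · exact Or.inr (hsub hx)
        · right
          exact mem_biUnion (x := q) (Finset.mem_insert_self _ _) hx
    · refine ⟨γ₁, k1, ?_, k3.trans (union_subset_union_right _ hsub)⟩
      intro p hp
      rcases Finset.mem_insert.1 hp with rfl | hp'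
      · exact hq1
      · exact k2 p hp'

lemma arcBody_compact {γ : ℝ → Pt} {a b : Pt} (h : IsArcFrom γ a b) : IsCompact (arcBody γ) :=
  isCompact_Icc.image_of_continuousOn h.1

lemma arcInterior_eq {γ : ℝ → Pt} {a b : Pt} (h : IsArcFrom γ a b) :
    arcInterior γ = arcBody γ \ {a, b} := by
  obtain ⟨hc, hi, h0, h1⟩ := h
  ext x
  constructor
  · rintro ⟨t, ht, rfl⟩
    refine ⟨⟨t, Ioo_subset_Icc_self ht, rfl⟩, ?_⟩
    rintro (h | h)
    · exact ht.1.ne' (hi (Ioo_subset_Icc_self ht) (by simp) (h.trans h0.symm))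
    · exact ht.2.ne (hi (Ioo_subset_Icc_self ht) (by simp) (Eq.trans h h1.symm))
  · rintro ⟨⟨t, ht, rfl⟩, hn⟩
    refine ⟨t, ⟨lt_of_le_of_ne ht.1 ?_, lt_of_le_of_ne ht.2 ?_⟩, rfl⟩
    · rintro rfl; exact hn (Or.inl h0)
    · rintro rfl; exact hn (Or.inr h1)

lemma IsArcFrom.rev {γ : ℝ → Pt} {a b : Pt} (h : IsArcFrom γ a b) :
    IsArcFrom (fun t => γ (1 - t)) b a := by
  obtain ⟨hc, hi, h0, h1⟩ := h
  have hm : MapsTo (fun t : ℝ => 1 - t) (Icc 0 1) (Icc 0 1) := by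
    rintro t ⟨h, h'⟩
    constructor <;> simp only <;> linarith
  refine ⟨hc.comp (by fun_prop) hm, ?_, by simp [h1], by simp [h0]⟩
  intro t ht s hs h
  have := hi (hm ht) (hm hs) h
  simp only at this
  linarith

lemma arcInterior_rev (γ : ℝ → Pt) : arcInterior (fun t => γ (1 - t)) = arcInterior γ := by
  ext x
  constructor
  · rintro ⟨t, ht, rfl⟩
    exact ⟨1 - t, ⟨by linarith [ht.2], by linarith [ht.1]⟩, rfl⟩
  · rintro ⟨t, ht, rfl⟩
    exact ⟨1 - t, ⟨by linarith [ht.2], by linarith [ht.1]⟩, by simp⟩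

lemma exists_radius (P : Finset Pt) {ι : Type} [Finite ι] (K : ι → Set Pt)
    (hK : ∀ j, IsClosed (K j)) :
    ∃ r : ℝ, 0 < r ∧ (∀ p ∈ P, ∀ j, p ∉ K j → Disjoint (Metric.closedBall p r) (K j)) ∧
      (∀ p ∈ P, ∀ q ∈ P, p ≠ q →
        Disjoint (Metric.closedBall p r) (Metric.closedBall q r)) := by
  have key : ∀ᶠ r in nhdsWithin (0:ℝ) (Ioi 0), 0 < r ∧
      (∀ p ∈ P, ∀ j, p ∉ K j → Disjoint (Metric.closedBall p r) (K j)) ∧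
      (∀ p ∈ P, ∀ q ∈ P, p ≠ q →
        Disjoint (Metric.closedBall p r) (Metric.closedBall q r)) := by
    refine Filter.Eventually.and self_mem_nhdsWithin (Filter.Eventually.and ?_ ?_)
    · refine (Filter.eventually_all_finset P).2 fun p _ => Filter.eventually_all.2 fun j => ?_
      by_cases hp : p ∈ K j
      · simp [hp]
      · obtain ⟨ε, hε, hs⟩ := Metric.isOpen_iff.1 (hK j).isOpen_compl p hp
        have : ∀ᶠ r in nhdsWithin (0:ℝ) (Ioi 0), r < ε :=
          nhdsWithin_le_nhds (Iio_mem_nhds hε)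
        filter_upwards [this] with r hr _
        exact disjoint_left.2 fun x hx hxK =>
          hs (Metric.closedBall_subset_ball hr hx) hxK
    · refine (Filter.eventually_all_finset P).2 fun p _ =>
        (Filter.eventually_all_finset P).2 fun q _ => ?_
      by_cases hpq : p = q
      · simp [hpq]
      · have : ∀ᶠ r in nhdsWithin (0:ℝ) (Ioi 0), r < dist p q / 2 :=
          nhdsWithin_le_nhds (Iio_mem_nhds (half_pos (dist_pos.2 hpq)))
        filter_upwards [this] with r hr _
        exact Metric.closedBall_disjoint_closedBall (by linarith)
  obtain ⟨r, hr⟩ := key.exists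
  exact ⟨r, hr⟩

lemma global_of_realization {n ω : ℕ} {G : SimpleGraph (Fin n)} {P : Set Pt}
    (R : Realization n ω G P) :
    ∃ D : RawDrawing n, ∀ i, 1 ≤ i → i ≤ n →
      IsPlanarDrawingOn n G (window n ω i) P D := by
  have hpos : ∀ i, 1 ≤ i → i ≤ n → ∀ v ∈ window n ω i,
      (R.Γ i).pos v = (R.Γ (v.val + 1)).pos v := by
    intro i
    induction i with
    | zero => intro h; omega
    | succ i ih =>
      rintro h1 h2 v ⟨hv1, hv2⟩
      by_cases h : v.val = i
      · rw [h]
      · rw [R.pos_eq (i+1) (by omega) h2 v ⟨⟨by omega, by omega⟩, hv1, hv2⟩]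
        exact ih (by omega) (by omega) v ⟨by omega, by omega⟩
  have hcurve : ∀ i, 1 ≤ i → i ≤ n → ∀ u ∈ window n ω i, ∀ v ∈ window n ω i, G.Adj u v →
      (R.Γ i).curve u v = (R.Γ (max u.val v.val + 1)).curve u v := by
    intro i
    induction i with
    | zero => intro h; omega
    | succ i ih =>
      rintro h1 h2 u ⟨hu1, hu2⟩ v ⟨hv1, hv2⟩ ha
      by_cases h : max u.val v.val = i
      · rw [h]
      · rw [R.curve_eq (i+1) (by omega) h2 u ⟨⟨by omega, by omega⟩, hu1, hu2⟩
          v ⟨⟨by omega, by omega⟩, hv1, hv2⟩ ha]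
        exact ih (by omega) (by omega) u ⟨by omega, by omega⟩ v ⟨by omega, by omega⟩ ha
  refine ⟨⟨fun v => (R.Γ (v.val + 1)).pos v,
    fun u v => (R.Γ (max u.val v.val + 1)).curve u v⟩, fun i h1 h2 => ?_⟩
  have H := R.planar i h1 h2
  refine ⟨?_, ?_, ?_, ?_, ?_, ?_⟩
  · intro v hv
    simp only
    rw [← hpos i h1 h2 v hv]
    exact H.pos_mem v hv
  · intro v hv w hw h
    simp only at h
    rw [← hpos i h1 h2 v hv, ← hpos i h1 h2 w hw] at h
    exact H.pos_inj hv hw h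
  · intro u v
    simp only
    rw [max_comm v.val u.val]
    exact (R.planar (max u.val v.val + 1) (by omega) (by omega)).curve_symm u v
  · intro u hu v hv ha
    simp only
    rw [← hpos i h1 h2 u hu, ← hpos i h1 h2 v hv, ← hcurve i h1 h2 u hu v hv ha]
    exact H.arc u hu v hv ha
  · intro u hu v hv ha w hw
    simp only
    rw [← hpos i h1 h2 w hw, ← hcurve i h1 h2 u hu v hv ha]
    exact H.vertex_off_arc u hu v hv ha w hw
  · intro u hu v hv x hx y hy ha hb hne
    simp only
    rw [← hcurve i h1 h2 x hx y hy hb, ← hcurve i h1 h2 u hu v hv ha]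
    exact H.no_cross u hu v hv x hx y hy ha hb hne

lemma clean_drawing {n : ℕ} {G : SimpleGraph (Fin n)} (P : Finset Pt) (F : Set (Set (Fin n)))
    (D : RawDrawing n) (hD : ∀ S ∈ F, IsPlanarDrawingOn n G S (↑P) D)
    (hF : ∀ u v, G.Adj u v → ∃ S ∈ F, u ∈ S ∧ v ∈ S) :
    ∃ D' : RawDrawing n, (∀ S ∈ F, IsPlanarDrawingOn n G S (↑P) D') ∧
      ∀ u v, G.Adj u v → ∀ p ∈ P, p ∉ arcInterior (D'.curve u v) := by
  classical
  have harc : ∀ u v, G.Adj u v → IsArcFrom (D.curve u v) (D.pos u) (D.pos v) := by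
    intro u v h
    obtain ⟨S, hS, hu, hv⟩ := hF u v h
    exact (hD S hS).arc u hu v hv h
  have hposP : ∀ u v, G.Adj u v → D.pos u ∈ P := by
    intro u v h
    obtain ⟨S, hS, hu, hv⟩ := hF u v h
    exact (hD S hS).pos_mem u hu
  obtain ⟨r, hr, hrK, hrP⟩ := exists_radius P
    (fun e : {e : Fin n × Fin n // G.Adj e.1 e.2} => arcBody (D.curve e.1.1 e.1.2))
    (fun e => (arcBody_compact (harc _ _ e.2)).isClosed)
  have hball : ∀ p ∈ P, ∀ q ∈ P, p ≠ q → q ∉ Metric.closedBall p r := by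
    intro p hp q hq hne hmem
    exact disjoint_left.1 (hrP p hp q hq hne) hmem (Metric.mem_closedBall_self hr.le)
  have hC : ∀ u v, ∃ γ' : ℝ → Pt, G.Adj u v → IsArcFrom γ' (D.pos u) (D.pos v) ∧
      (∀ p ∈ P, p ∉ arcInterior γ') ∧
      ∀ x ∈ arcInterior γ', x ∈ arcInterior (D.curve u v) ∨
        ∃ q ∈ P, q ∈ arcInterior (D.curve u v) ∧ x ∈ Metric.closedBall q r := by
    intro u v
    by_cases h : G.Adj u v
    · have hPv : D.pos v ∈ P := hposP v u h.symm
      have hPu : D.pos u ∈ P := hposP u v h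
      have hint := arcInterior_eq (harc u v h)
      obtain ⟨γ', k1, k2, k3⟩ := detour_all (D.curve u v) _ _ (harc u v h) r hr
        (P.filter fun q => q ∈ arcInterior (D.curve u v))
        (fun p hp q hq => hball p (Finset.mem_filter.1 hp).1 q (Finset.mem_filter.1 hq).1)
        (by
          intro q hq
          obtain ⟨hq1, hq2⟩ := Finset.mem_filter.1 hq
          have := hball q hq1 _ hPu (by
            rintro rfl; rw [hint] at hq2; exact hq2.2 (Or.inl rfl))
          simpa using this)
        (by
          intro q hq
          obtain ⟨hq1, hq2⟩ := Finset.mem_filter.1 hq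
          have := hball q hq1 _ hPv (by
            rintro rfl; rw [hint] at hq2; exact hq2.2 (Or.inr rfl))
          simpa using this)
      have k4 : ∀ x ∈ arcInterior γ', x ∈ arcInterior (D.curve u v) ∨
          ∃ q ∈ P, q ∈ arcInterior (D.curve u v) ∧ x ∈ Metric.closedBall q r := by
        intro x hx
        rcases k3 hx with hx | hx
        · exact Or.inl hx
        · obtain ⟨q, hq, hxq⟩ := mem_iUnion₂.1 hx
          obtain ⟨hq1, hq2⟩ := Finset.mem_filter.1 hq
          exact Or.inr ⟨q, hq1, hq2, hxq⟩
      refine ⟨γ', fun _ => ⟨k1, ?_, k4⟩⟩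
      intro p hp hpi
      by_cases hpg : p ∈ arcInterior (D.curve u v)
      · exact k2 p (Finset.mem_filter.2 ⟨hp, hpg⟩) hpi
      · rcases k4 p hpi with hx | ⟨q, hq, hqi, hx⟩
        · exact hpg hx
        · refine hball q hq p hp ?_ hx
          rintro rfl
          exact hpg hqi
    · exact ⟨fun _ => 0, fun h' => absurd h' h⟩
  choose C hC using hC
  let D' : RawDrawing n := ⟨D.pos, fun u v => if u < v then C u v else
    if v < u then fun t => C v u (1 - t) else fun _ => 0⟩
  have hD' : ∀ u v, G.Adj u v → IsArcFrom (D'.curve u v) (D.pos u) (D.pos v) ∧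
      (∀ p ∈ P, p ∉ arcInterior (D'.curve u v)) ∧
      ∀ x ∈ arcInterior (D'.curve u v), x ∈ arcInterior (D.curve u v) ∨
        ∃ q ∈ P, q ∈ arcInterior (D.curve u v) ∧ x ∈ Metric.closedBall q r := by
    intro u v h
    rcases lt_trichotomy u v with hlt | heq | hlt
    · have : D'.curve u v = C u v := if_pos hlt
      rw [this]
      exact hC u v h
    · exact absurd heq h.ne
    · have : D'.curve u v = fun t => C v u (1 - t) := by
        show (if u < v then C u v else if v < u then fun t => C v u (1 - t) else fun _ => 0) = _
        rw [if_neg hlt.not_gt, if_pos hlt]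
      obtain ⟨S, hS, hu, hv⟩ := hF u v h
      have e : arcInterior (D.curve u v) = arcInterior (D.curve v u) := by
        rw [(hD S hS).curve_symm v u, arcInterior_rev]
      rw [this, arcInterior_rev, e]
      obtain ⟨q1, q2, q3⟩ := hC v u h.symm
      exact ⟨q1.rev, q2, q3⟩
  refine ⟨D', fun S hS => ?_, fun u v h => (hD' u v h).2.1⟩
  have H := hD S hS
  refine ⟨H.pos_mem, H.pos_inj, ?_, fun u _ v _ h => (hD' u v h).1, ?_, ?_⟩
  · intro u v
    show (if v < u then C v u else if u < v then fun t => C u v (1 - t) else fun _ => 0) =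
      fun t => (if u < v then C u v else if v < u then fun t => C v u (1 - t) else fun _ => 0)
        (1 - t)
    rcases lt_trichotomy u v with hlt | heq | hlt
    · rw [if_neg hlt.not_gt, if_pos hlt, if_pos hlt]
    · subst heq; simp
    · rw [if_pos hlt, if_neg hlt.not_gt]
      funext s
      have e : (1:ℝ) - (1 - s) = s := by ring
      rw [if_pos hlt]
      show C v u s = C v u (1 - (1 - s))
      rw [e]
  · intro u hu v hv h w hw
    exact (hD' u v h).2.1 _ (H.pos_mem w hw)
  · intro u hu v hv x hx y hy h h' hne
    have hcr := H.no_cross u hu v hv x hx y hy h h' hne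
    have aux : ∀ u ∈ S, ∀ v ∈ S, ∀ x ∈ S, ∀ y ∈ S, G.Adj u v → (h' : G.Adj x y) →
        arcInterior (D.curve u v) ∩ arcInterior (D.curve x y) = ∅ →
        ∀ q ∈ P, q ∈ arcInterior (D.curve u v) → ∀ z ∈ Metric.closedBall q r,
          z ∉ arcInterior (D.curve x y) := by
      intro u hu v hv x hx y hy h h' hcr q hq hqi z hz hzi
      have hz' := hzi
      rw [arcInterior_eq (harc x y h')] at hz'
      refine disjoint_left.1 (hrK q hq ⟨(x, y), h'⟩ ?_) hz hz'.1
      intro hqb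
      by_cases hqe : q ∈ ({D.pos x, D.pos y} : Set Pt)
      · rcases hqe with e | e
        · exact H.vertex_off_arc u hu v hv h x hx (e ▸ hqi)
        · rw [mem_singleton_iff] at e
          exact H.vertex_off_arc u hu v hv h y hy (e ▸ hqi)
      · have : q ∈ arcInterior (D.curve x y) := by
          rw [arcInterior_eq (harc x y h')]
          exact ⟨hqb, hqe⟩
        exact eq_empty_iff_forall_notMem.1 hcr _ ⟨hqi, this⟩
    apply eq_empty_of_forall_notMem
    rintro z ⟨hz1, hz2⟩
    rcases (hD' u v h).2.2 z hz1 with a1 | ⟨q, hq, hqi, a1⟩ <;>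
      rcases (hD' x y h').2.2 z hz2 with b1 | ⟨q', hq', hqi', b1⟩
    · exact eq_empty_iff_forall_notMem.1 hcr _ ⟨a1, b1⟩
    · exact aux x hx y hy u hu v hv h' h (by rw [inter_comm]; exact hcr) q' hq' hqi' z b1 a1
    · exact aux u hu v hv x hx y hy h h' hcr q hq hqi z a1 b1
    · by_cases e : q = q'
      · subst e
        exact eq_empty_iff_forall_notMem.1 hcr _ ⟨hqi, hqi'⟩
      · exact disjoint_left.1 (hrP q hq q' hq' e) a1 b1

lemma window_ncard {n ω i : ℕ} (h1 : ω ≤ i) (h2 : i ≤ n) : (window n ω i).ncard = ω := by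
  have : window n ω i = Set.range (fun j : Fin ω => (⟨i - ω + j.val, by omega⟩ : Fin n)) := by
    ext ⟨v, hv⟩
    simp only [window, mem_setOf_eq, mem_range, Fin.mk.injEq]
    constructor
    · rintro ⟨h3, h4⟩
      exact ⟨⟨v - (i - ω), by omega⟩, by simp only; omega⟩
    · rintro ⟨j, hj⟩
      omega
  rw [this, ← image_univ, ncard_image_of_injective]
  · simp
  · intro a b h
    simp only [Fin.mk.injEq] at h
    apply Fin.ext
    omega

lemma forward (n ω k : ℕ) (G : SimpleGraph (Fin n))
    (hω : 1 ≤ ω) (hvis : Visible n ω G) (hR : Realizable n ω k G) :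
      ∃ W : (i : ℕ) → ω ≤ i → i ≤ n → WeightedDrawing n k G (window n ω i),
        ∀ (i : ℕ) (_ : ω + 1 ≤ i) (h2 : i ≤ n) (h3 : ω ≤ i - 1) (h4 : i - 1 ≤ n) (h5 : ω ≤ i),
          CompatiblePair n ω k G i (W (i - 1) h3 h4) (W i h5 h2) := by
  classical
  obtain ⟨P, hP, ⟨R⟩⟩ := hR
  obtain ⟨D₀, hD₀⟩ := global_of_realization R
  obtain ⟨D, hD, hclean⟩ := clean_drawing P {S | ∃ i, 1 ≤ i ∧ i ≤ n ∧ S = window n ω i} D₀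
    (by rintro S ⟨i, h1, h2, rfl⟩; exact hD₀ i h1 h2)
    (by
      intro u v h
      have := hvis u v h
      refine ⟨_, ⟨max u.val v.val + 1, by omega, by omega, rfl⟩, ⟨by omega, by omega⟩,
        by omega, by omega⟩)
  have hD : ∀ i, 1 ≤ i → i ≤ n → IsPlanarDrawingOn n G (window n ω i) (↑P) D :=
    fun i h1 h2 => hD _ ⟨i, h1, h2, rfl⟩
  refine ⟨fun i h1 h2 => ⟨D, ?_, P.filter fun p => p ∉ D.pos '' window n ω i, ?_, ?_⟩, ?_⟩
  · have H := hD i (by omega) h2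
    exact ⟨fun _ _ => mem_univ _, H.pos_inj, H.curve_symm, H.arc, H.vertex_off_arc, H.no_cross⟩
  · have H := hD i (by omega) h2
    have e : ((P.filter fun p => p ∈ D.pos '' window n ω i : Finset Pt) : Set Pt) =
        D.pos '' window n ω i := by
      ext p
      simp only [Finset.coe_filter, mem_setOf_eq, and_iff_right_iff_imp]
      rintro ⟨v, hv, rfl⟩
      exact H.pos_mem v hv
    have e2 : (P.filter fun p => p ∈ D.pos '' window n ω i).card = ω := by
      rw [← ncard_coe_finset, e, ncard_image_of_injOn H.pos_inj, window_ncard h1 h2]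
    have e3 := Finset.card_filter_add_card_filter_not (s := P)
      (fun p => p ∈ D.pos '' window n ω i)
    omega
  · intro p hp hpi
    obtain ⟨hpP, hp2⟩ := Finset.mem_filter.1 hp
    rcases hpi with h | h
    · exact hp2 h
    · simp only [mem_iUnion] at h
      obtain ⟨u, v, hu, hv, ha, hb⟩ := h
      apply hclean u v ha p hpP
      rw [arcInterior_eq ((hD i (by omega) h2).arc u hu v hv ha)]
      refine ⟨hb, ?_⟩
      rintro (e | e)
      · exact hp2 ⟨u, hu, e.symm⟩
      · exact hp2 ⟨v, hv, Eq.symm e⟩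
  · intro i h1 h2 _ _ _
    refine ⟨⟨i - 1 - ω, by omega⟩, ⟨i - 1, by omega⟩, by simp only; omega, by simp only; omega,
      Homeomorph.refl _, fun v _ => rfl, fun u _ v _ _ => by simp, ?_⟩
    simp only [Homeomorph.refl_apply, Homeomorph.coe_refl, image_id]
    have aux : ∀ j, ω ≤ j → j ≤ n → ∀ (c : Fin n) (S : Set (Fin n)), c ∉ S →
        window n ω j = insert c S →
        (((P.filter fun p => p ∉ D.pos '' window n ω j : Finset Pt) : Set Pt) ∪ {D.pos c}) =
        ↑P \ (D.pos '' S) := by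
      intro j hj1 hj2 c S hc hS
      have H := hD j (by omega) hj2
      have hcw : c ∈ window n ω j := by rw [hS]; exact mem_insert _ _
      ext p
      simp only [Finset.coe_filter, mem_union, mem_setOf_eq, mem_singleton_iff, mem_diff,
        Finset.mem_coe]
      constructor
      · rintro (⟨h3, h4⟩ | rfl)
        · refine ⟨h3, fun h5 => h4 (image_mono ?_ h5)⟩
          rw [hS]; exact subset_insert _ _
        · refine ⟨H.pos_mem c hcw, ?_⟩
          rintro ⟨w, hw, he⟩
          have := H.pos_inj (by rw [hS]; exact mem_insert_of_mem _ hw) hcw he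
          exact hc (this ▸ hw)
      · rintro ⟨h3, h4⟩
        by_cases h5 : p = D.pos c
        · exact Or.inr h5
        · left
          refine ⟨h3, ?_⟩
          rw [hS, image_insert_eq]
          rintro (h6 | h6)
          · exact h5 h6
          · exact h4 h6
    rw [aux (i-1) (by omega) (by omega) ⟨i - 1 - ω, by omega⟩
      (window n ω (i - 1) ∩ window n ω i) ?_ ?_,
      aux i (by omega) (by omega) ⟨i - 1, by omega⟩
      (window n ω (i - 1) ∩ window n ω i) ?_ ?_]
    · rintro ⟨⟨h3, h4⟩, h5, h6⟩
      simp only at *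
      omega
    · ext ⟨v, hv⟩
      simp only [window, mem_setOf_eq, mem_insert_iff, mem_inter_iff, Fin.mk.injEq]
      omega
    · rintro ⟨⟨h3, h4⟩, h5, h6⟩
      simp only at *
      omega
    · ext ⟨v, hv⟩
      simp only [window, mem_setOf_eq, mem_insert_iff, mem_inter_iff, Fin.mk.injEq]
      omega

lemma IsArcFrom.homeo {γ : ℝ → Pt} {a b : Pt} (h : IsArcFrom γ a b) (f : Homeomorph Pt Pt) :
    IsArcFrom (fun t => f (γ t)) (f a) (f b) := by
  obtain ⟨hc, hi, h0, h1⟩ := h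
  refine ⟨f.continuous.comp_continuousOn hc, ?_, by simp [h0], by simp [h1]⟩
  intro t ht s hs he
  exact hi ht hs (f.injective he)

lemma arcBody_homeo (γ : ℝ → Pt) (f : Homeomorph Pt Pt) :
    arcBody (fun t => f (γ t)) = f '' arcBody γ := by
  simp [arcBody, image_image]

lemma backward (n ω k : ℕ) (G : SimpleGraph (Fin n))
    (hω : 1 ≤ ω) (hωn : ω ≤ n) (hvis : Visible n ω G)
    (W : (i : ℕ) → ω ≤ i → i ≤ n → WeightedDrawing n k G (window n ω i))
    (hW : ∀ (i : ℕ) (_ : ω + 1 ≤ i) (h2 : i ≤ n) (h3 : ω ≤ i - 1) (h4 : i - 1 ≤ n) (h5 : ω ≤ i),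
          CompatiblePair n ω k G i (W (i - 1) h3 h4) (W i h5 h2)) :
    Realizable n ω k G := by
  classical
  -- total versions of the data
  let E : ℕ → RawDrawing n := fun i =>
    if h : ω ≤ i ∧ i ≤ n then (W i h.1 h.2).D else ⟨fun _ => 0, fun _ _ _ => 0⟩
  let M : ℕ → Finset Pt := fun i =>
    if h : ω ≤ i ∧ i ≤ n then (W i h.1 h.2).marks else ∅
  have hE : ∀ i (h1 : ω ≤ i) (h2 : i ≤ n), E i = (W i h1 h2).D := fun i h1 h2 =>
    dif_pos ⟨h1, h2⟩
  have hM : ∀ i (h1 : ω ≤ i) (h2 : i ≤ n), M i = (W i h1 h2).marks := fun i h1 h2 =>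
    dif_pos ⟨h1, h2⟩
  have hpl : ∀ i, ω ≤ i → i ≤ n → IsPlanarDrawingOn n G (window n ω i) univ (E i) := by
    intro i h1 h2
    rw [hE i h1 h2]
    exact (W i h1 h2).planar
  have hstep : ∀ i, ∃ φ : Homeomorph Pt Pt, ω ≤ i → i + 1 ≤ n →
      ∃ a b : Fin n, a.val + ω = i ∧ b.val = i ∧
      (∀ v ∈ window n ω i ∩ window n ω (i+1), φ ((E i).pos v) = (E (i+1)).pos v) ∧
      (∀ u ∈ window n ω i ∩ window n ω (i+1), ∀ v ∈ window n ω i ∩ window n ω (i+1), G.Adj u v →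
        φ '' arcBody ((E i).curve u v) = arcBody ((E (i+1)).curve u v)) ∧
      φ '' (↑(M i) ∪ {(E i).pos a}) = ↑(M (i+1)) ∪ {(E (i+1)).pos b} := by
    intro i
    by_cases h : ω ≤ i ∧ i + 1 ≤ n
    · obtain ⟨h1, h2⟩ := h
      obtain ⟨a, b, ha, hb, φ, p1, p2, p3⟩ := hW (i+1) (by omega) h2 h1 (by omega) (by omega)
      refine ⟨φ, fun _ _ => ⟨a, b, by omega, by omega, ?_⟩⟩
      rw [hE i h1 (by omega), hE (i+1) (by omega) h2, hM i h1 (by omega),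
        hM (i+1) (by omega) h2]
      exact ⟨p1, p2, p3⟩
    · exact ⟨Homeomorph.refl _, fun h1 h2 => absurd ⟨h1, h2⟩ h⟩
  choose φ hφ using hstep
  let Ψ : ℕ → Homeomorph Pt Pt := fun i =>
    Nat.rec (Homeomorph.refl _) (fun j f => f.trans (φ j)) i
  have hΨ : ∀ i x, (Ψ (i+1)).symm x = (Ψ i).symm ((φ i).symm x) := fun i x => rfl
  let t : Fin n → ℕ := fun v => max (v.val + 1) ω
  let D : RawDrawing n := ⟨fun v => (Ψ (t v)).symm ((E (t v)).pos v),
    fun u v s => (Ψ (max (t u) (t v))).symm ((E (max (t u) (t v))).curve u v s)⟩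
  have hpos : ∀ i, ω ≤ i → i ≤ n → ∀ v ∈ window n ω i,
      D.pos v = (Ψ i).symm ((E i).pos v) := by
    intro i h1
    induction i, h1 using Nat.le_induction with
    | base =>
      rintro h2 v ⟨hv1, hv2⟩
      have : t v = ω := by simp only [t]; omega
      simp only [D, this]
    | succ i h1 ih =>
      rintro h2 v ⟨hv1, hv2⟩
      by_cases h : v.val = i
      · have : t v = i + 1 := by simp only [t]; omega
        simp only [D, this]
      · have hv : v ∈ window n ω i := ⟨by omega, by omega⟩
        obtain ⟨a, b, _, _, p1, _, _⟩ := hφ i h1 h2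
        rw [ih (by omega) v hv, hΨ, ← p1 v ⟨hv, hv1, hv2⟩, Homeomorph.symm_apply_apply]
  have hbody : ∀ i, ω ≤ i → i ≤ n → ∀ u ∈ window n ω i, ∀ v ∈ window n ω i, G.Adj u v →
      arcBody (D.curve u v) = (Ψ i).symm '' arcBody ((E i).curve u v) := by
    intro i h1
    induction i, h1 using Nat.le_induction with
    | base =>
      rintro h2 u ⟨hu1, hu2⟩ v ⟨hv1, hv2⟩ ha
      have : max (t u) (t v) = ω := by simp only [t]; omega
      rw [← arcBody_homeo]
      simp only [D, this]
    | succ i h1 ih =>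
      rintro h2 u ⟨hu1, hu2⟩ v ⟨hv1, hv2⟩ ha
      by_cases h : max u.val v.val = i
      · have : max (t u) (t v) = i + 1 := by simp only [t]; omega
        rw [← arcBody_homeo]
        simp only [D, this]
      · have hv : v ∈ window n ω i := ⟨by omega, by omega⟩
        have hu : u ∈ window n ω i := ⟨by omega, by omega⟩
        obtain ⟨a, b, _, _, _, p2, _⟩ := hφ i h1 h2
        rw [ih (by omega) u hu v hv ha, ← p2 u ⟨hu, hu1, hu2⟩ v ⟨hv, hv1, hv2⟩ ha, image_image]
        apply image_congr
        intro x _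
        rw [hΨ, Homeomorph.symm_apply_apply]
  have harc : ∀ u v, G.Adj u v → IsArcFrom (D.curve u v) (D.pos u) (D.pos v) := by
    intro u v ha
    have hv := hvis u v ha
    have h1 : ω ≤ max (t u) (t v) := by simp only [t]; omega
    have h2 : max (t u) (t v) ≤ n := by simp only [t]; omega
    have hu' : u ∈ window n ω (max (t u) (t v)) := by
      simp only [t]; constructor <;> omega
    have hv' : v ∈ window n ω (max (t u) (t v)) := by
      simp only [t]; constructor <;> omega
    rw [hpos _ h1 h2 u hu', hpos _ h1 h2 v hv']
    exact ((hpl _ h1 h2).arc u hu' v hv' ha).homeo _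
  have hint : ∀ i, ω ≤ i → i ≤ n → ∀ u ∈ window n ω i, ∀ v ∈ window n ω i, G.Adj u v →
      arcInterior (D.curve u v) = (Ψ i).symm '' arcInterior ((E i).curve u v) := by
    intro i h1 h2 u hu v hv ha
    rw [arcInterior_eq (harc u v ha), arcInterior_eq ((hpl i h1 h2).arc u hu v hv ha),
      image_diff (Ψ i).symm.injective, hbody i h1 h2 u hu v hv ha, image_pair,
      hpos i h1 h2 u hu, hpos i h1 h2 v hv]
  have hinj : ∀ i, ω ≤ i → i ≤ n → InjOn D.pos (window n ω i) := by
    intro i h1 h2 u hu v hv h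
    rw [hpos i h1 h2 u hu, hpos i h1 h2 v hv] at h
    exact (hpl i h1 h2).pos_inj hu hv ((Ψ i).symm.injective h)
  -- the point set
  let P : ℕ → Set Pt := fun i => ((Ψ i).symm '' (M i : Set Pt)) ∪ D.pos '' window n ω i
  have hP : ∀ i, ω ≤ i → i ≤ n → P i = P ω := by
    intro i h1
    induction i, h1 using Nat.le_induction with
    | base => intro _; rfl
    | succ i h1 ih =>
      intro h2
      rw [← ih (by omega)]
      obtain ⟨a, b, ha, hb, _, _, p3⟩ := hφ i h1 h2
      set S := window n ω i ∩ window n ω (i+1) with hS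
      have w1 : window n ω i = insert a S := by
        ext v
        simp only [hS, window, mem_setOf_eq, mem_insert_iff, mem_inter_iff, Fin.ext_iff]
        omega
      have w2 : window n ω (i+1) = insert b S := by
        ext v
        simp only [hS, window, mem_setOf_eq, mem_insert_iff, mem_inter_iff, Fin.ext_iff]
        omega
      have ha' : a ∈ window n ω i := by rw [w1]; exact mem_insert _ _
      have hb' : b ∈ window n ω (i+1) := by rw [w2]; exact mem_insert _ _
      have e1 : P i = (Ψ i).symm '' (↑(M i) ∪ {(E i).pos a}) ∪ D.pos '' S := by
        simp only [P]
        rw [w1, image_insert_eq, image_union, image_singleton, ← hpos i h1 (by omega) a ha',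
          insert_eq, union_assoc]
      have e2 : P (i+1) = (Ψ (i+1)).symm '' (↑(M (i+1)) ∪ {(E (i+1)).pos b}) ∪ D.pos '' S := by
        simp only [P]
        rw [w2, image_insert_eq, image_union, image_singleton,
          ← hpos (i+1) (by omega) h2 b hb', insert_eq, union_assoc]
      rw [e1, e2, ← p3, image_image]
      congr 1
      apply image_congr
      intro x _
      rw [hΨ, Homeomorph.symm_apply_apply]
  have hfin : (P ω).Finite :=
    ((M ω).finite_toSet.image _).union ((toFinite (window n ω ω)).image _)
  have hplanar : ∀ i, ω ≤ i → i ≤ n → IsPlanarDrawingOn n G (window n ω i) (P ω) D := by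
    intro i h1 h2
    have H := hpl i h1 h2
    refine ⟨?_, hinj i h1 h2, ?_, fun u _ v _ ha => harc u v ha, ?_, ?_⟩
    · intro v hv
      rw [← hP i h1 h2]
      exact Or.inr ⟨v, hv, rfl⟩
    · intro u v
      have h3 : ω ≤ max (t u) (t v) := by simp only [t]; omega
      have h4 : max (t u) (t v) ≤ n := by simp only [t]; omega
      funext s
      simp only [D]
      rw [max_comm (t v) (t u), (hpl _ h3 h4).curve_symm u v]
    · intro u hu v hv ha w hw hcon
      rw [hint i h1 h2 u hu v hv ha, hpos i h1 h2 w hw] at hcon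
      exact H.vertex_off_arc u hu v hv ha w hw
        ((Ψ i).symm.injective.mem_set_image.1 hcon)
    · intro u hu v hv x hx y hy ha hb hne
      rw [hint i h1 h2 u hu v hv ha, hint i h1 h2 x hx y hy hb,
        ← image_inter (Ψ i).symm.injective, H.no_cross u hu v hv x hx y hy ha hb hne, image_empty]
  refine ⟨hfin.toFinset, ?_, ⟨⟨fun _ => D, ?_, fun _ _ _ _ _ => rfl,
    fun _ _ _ _ _ _ _ _ => rfl⟩⟩⟩
  · rw [← ncard_eq_toFinset_card (P ω) hfin]
    simp only [P]
    rw [ncard_union_eq ?_ ((M ω).finite_toSet.image _) ((toFinite (window n ω ω)).image _),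
      ncard_image_of_injective _ (Ψ ω).symm.injective, ncard_coe_finset,
      ncard_image_of_injOn (hinj ω le_rfl hωn), window_ncard le_rfl hωn, hM ω le_rfl hωn,
      (W ω le_rfl hωn).marks_card, add_comm]
    rw [disjoint_left]
    rintro _ ⟨x, hx, rfl⟩ ⟨v, hv, he⟩
    rw [hpos ω le_rfl hωn v hv] at he
    have he' := (Ψ ω).symm.injective he
    rw [hM ω le_rfl hωn] at hx
    rw [hE ω le_rfl hωn] at he'
    exact (W ω le_rfl hωn).marks_off x hx (Or.inl ⟨v, hv, he'⟩)
  · intro i h1 h2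
    rw [hfin.coe_toFinset]
    by_cases h : ω ≤ i
    · exact hplanar i h h2
    · have H := hplanar ω le_rfl hωn
      have hs : window n ω i ⊆ window n ω ω := by
        rintro v ⟨h3, h4⟩
        exact ⟨by omega, by omega⟩
      exact ⟨fun v hv => H.pos_mem v (hs hv), H.pos_inj.mono hs, H.curve_symm,
        fun u hu v hv => H.arc u (hs hu) v (hs hv),
        fun u hu v hv ha w hw => H.vertex_off_arc u (hs hu) v (hs hv) ha w (hs hw),
        fun u hu v hv x hx y hy =>
          H.no_cross u (hs hu) v (hs hv) x (hs hx) y (hs hy)⟩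

/-- **Lemma 3.** A graph story `S = (G, ω, k, τ)` is realizable if
and only if there exists a sequence `⟨φ_ω, φ_{ω+1}, …, φ_n⟩` of
face-`k`-weighted planar embeddings of the window graphs `⟨G_ω, …, G_n⟩` such
that `φ_{i-1}` and `φ_i` are compatible for every `i` with `ω + 1 ≤ i ≤ n`. -/
theorem realizable_iff_compatible_sequence (n ω k : ℕ) (G : SimpleGraph (Fin n))
    (hω : 1 ≤ ω) (hωn : ω ≤ n) (hvis : Visible n ω G) :
    Realizable n ω k G ↔
      ∃ W : (i : ℕ) → ω ≤ i → i ≤ n → WeightedDrawing n k G (window n ω i),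
        ∀ (i : ℕ) (h1 : ω + 1 ≤ i) (h2 : i ≤ n),
          CompatiblePair n ω k G i
            (W (i - 1) (by omega) (by omega)) (W i (by omega) h2) := by
  constructor
  · intro hR
    obtain ⟨W, hW⟩ := forward n ω k G hω hvis hR
    exact ⟨W, fun i h1 h2 => hW i h1 h2 _ _ _⟩
  · rintro ⟨W, hW⟩
    exact backward n ω k G hω hωn hvis W fun i h1 h2 _ _ _ => hW i h1 h2

end GraphStories
end

section
/- Every minimal graph story S = (G, ω, τ) in which G is an outerplanar graph is realizable. Moreover, any outerplanar embedding of G is a supporting embedding for S: for any outerplanar embedding φ of G, the restrictions φ_i of φ to the graphs G_i form a sequence of pairwise compatible embeddings, since consecutive restrictions to G_{i−1} ∩ G_i determine the same set of faces and both v_i and v_{i−ω} lie in the region corresponding to the external face. -/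
open Set

namespace GraphStories

/-- The external (unbounded) region determined by a compact plane set `X`:
the points outside `X` whose connected component in the complement of `X` is
unbounded. -/
def unboundedRegion (X : Set Pt) : Set Pt :=
  {p | p ∉ X ∧ ¬ Bornology.IsBounded (connectedComponentIn Xᶜ p)}

/-- `D` is an outerplanar drawing/embedding of `G`: a planar drawing of `G` in
which every vertex is incident to the external face. -/
def IsOuterplanarDrawing (n : ℕ) (G : SimpleGraph (Fin n)) (D : RawDrawing n) : Prop :=
  IsPlanarDrawing n G univ D ∧
  ∀ v : Fin n, D.pos v ∈ closure (unboundedRegion (drawingImage n G univ D))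

/-- `G` is outerplanar. -/
def Outerplanar (n : ℕ) (G : SimpleGraph (Fin n)) : Prop :=
  ∃ D : RawDrawing n, IsOuterplanarDrawing n G D

/-- The complement of a closed ball of the plane is preconnected. -/
theorem preconnected_outside (R : ℝ) (hR : 0 ≤ R) :
    IsPreconnected {z : Pt | R < ‖z‖} := by
  have hrank : 1 < Module.rank ℝ Pt := by
    have : Module.rank ℝ Pt = 2 := by
      rw [rank_prod', CommSemiring.rank_self]; norm_num
    rw [this]; norm_num
  have h0 : IsPreconnected ({0}ᶜ : Set Pt) :=
    (isConnected_compl_singleton_of_one_lt_rank hrank 0).isPreconnected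
  have him : {z : Pt | R < ‖z‖} = (fun y : Pt => (1 + R * ‖y‖⁻¹) • y) '' {0}ᶜ := by
    ext z
    simp only [mem_ofPred_eq, mem_image, mem_compl_iff, mem_singleton_iff]
    constructor
    · intro hz
      have hz0 : 0 < ‖z‖ := lt_of_le_of_lt hR hz
      have hd : 0 < ‖z‖ - R := sub_pos.2 hz
      refine ⟨((‖z‖ - R) / ‖z‖) • z, ?_, ?_⟩
      · rw [smul_eq_zero, not_or]
        exact ⟨(div_pos hd hz0).ne', norm_pos_iff.1 hz0⟩
      · rw [norm_smul, Real.norm_of_nonneg (div_pos hd hz0).le, smul_smul]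
        have : (1 + R * ((‖z‖ - R) / ‖z‖ * ‖z‖)⁻¹) * ((‖z‖ - R) / ‖z‖) = 1 := by
          field_simp
          ring
        rw [this, one_smul]
    · rintro ⟨y, hy, rfl⟩
      have hy0 : 0 < ‖y‖ := norm_pos_iff.2 hy
      have : 0 ≤ R * ‖y‖⁻¹ := by positivity
      rw [norm_smul, Real.norm_of_nonneg (by linarith)]
      have : (1 + R * ‖y‖⁻¹) * ‖y‖ = ‖y‖ + R := by field_simp
      rw [this]; linarith
  rw [him]
  refine h0.image _ ?_
  refine ContinuousOn.smul (continuousOn_const.add (continuousOn_const.mul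
    (continuous_norm.continuousOn.inv₀ ?_))) continuousOn_id
  intro x hx
  exact norm_ne_zero_iff.2 hx

/-- Any two points of the unbounded region of a bounded set lie in the same component. -/
theorem unbounded_same_component {X : Set Pt} (hX : Bornology.IsBounded X) {a b : Pt}
    (ha : a ∈ unboundedRegion X) (hb : b ∈ unboundedRegion X) :
    b ∈ connectedComponentIn Xᶜ a := by
  obtain ⟨R, hR⟩ := hX.exists_norm_le
  have hfar : ∀ c ∈ unboundedRegion X,
      ∃ c' ∈ connectedComponentIn Xᶜ c, max R 0 < ‖c'‖ := by
    intro c hc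
    by_contra hcon
    push Not at hcon
    exact hc.2 (isBounded_iff_forall_norm_le.2 ⟨max R 0, hcon⟩)
  obtain ⟨a', ha', haR⟩ := hfar a ha
  obtain ⟨b', hb', hbR⟩ := hfar b hb
  have hsub : {z : Pt | max R 0 < ‖z‖} ⊆ Xᶜ := by
    intro z hz hzX
    have h1 := hR z hzX
    have h2 : max R 0 < ‖z‖ := hz
    have h3 := le_max_left R 0
    linarith
  have h1 : b' ∈ connectedComponentIn Xᶜ a' :=
    (preconnected_outside (max R 0) (le_max_right _ _)).subset_connectedComponentIn haR hsub hbR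
  rw [← connectedComponentIn_eq ha'] at h1
  rw [connectedComponentIn_eq h1, ← connectedComponentIn_eq hb']
  exact mem_connectedComponentIn hb.1

/-- A homeomorphism supported in a ball moving its centre to a given point of the ball. -/
theorem push_ball (c p : Pt) (r : ℝ) (hp : ‖p - c‖ < r) :
    ∃ h : Homeomorph Pt Pt, h c = p ∧ ∀ z, z ∉ Metric.ball c r → h z = z := by
  have hr : 0 < r := lt_of_le_of_lt (norm_nonneg _) hp
  let g : Pt → ℝ := fun z => max 0 (1 - ‖z - c‖ / r)
  let f : Pt → Pt := fun z => z + g z • (p - c)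
  let K : NNReal := ⟨‖p - c‖ / r, by positivity⟩
  have hg : ∀ x y, |g x - g y| ≤ ‖x - y‖ / r := by
    intro x y
    have h1 : |g x - g y| ≤ |(1 - ‖x - c‖ / r) - (1 - ‖y - c‖ / r)| := by
      have := abs_max_sub_max_le_abs (1 - ‖x - c‖ / r) (1 - ‖y - c‖ / r) 0
      simpa [g, max_comm] using this
    have h2 : (1 - ‖x - c‖ / r) - (1 - ‖y - c‖ / r) = (‖y - c‖ - ‖x - c‖) / r := by ring
    rw [h2, abs_div, abs_of_pos hr] at h1
    refine h1.trans ?_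
    gcongr
    have := abs_norm_sub_norm_le (y - c) (x - c)
    rw [sub_sub_sub_cancel_right, norm_sub_rev y x] at this
    exact this
  have hf : ApproximatesLinearOn f
      ((ContinuousLinearEquiv.refl ℝ Pt : Pt ≃L[ℝ] Pt) : Pt →L[ℝ] Pt) univ K := by
    rw [ApproximatesLinearOn.approximatesLinearOn_iff_lipschitzOnWith]
    refine LipschitzOnWith.of_dist_le_mul ?_
    intro x _ y _
    have e : ∀ z, (f - ⇑((ContinuousLinearEquiv.refl ℝ Pt : Pt ≃L[ℝ] Pt) : Pt →L[ℝ] Pt)) z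
        = g z • (p - c) := by
      intro z
      simp [f]
    rw [e, e, dist_eq_norm, ← sub_smul, norm_smul, Real.norm_eq_abs, dist_eq_norm]
    calc |g x - g y| * ‖p - c‖ ≤ (‖x - y‖ / r) * ‖p - c‖ := by gcongr; exact hg x y
      _ = (K : ℝ) * ‖x - y‖ := by
        change _ = (‖p - c‖ / r) * ‖x - y‖
        ring
  have hK : K < 1 := by
    rw [← NNReal.coe_lt_coe]
    change ‖p - c‖ / r < 1
    rwa [div_lt_one hr]
  have hc : Subsingleton Pt ∨
      K < ‖((ContinuousLinearEquiv.refl ℝ Pt).symm : Pt →L[ℝ] Pt)‖₊⁻¹ := by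
    right
    have : ‖((ContinuousLinearEquiv.refl ℝ Pt).symm : Pt →L[ℝ] Pt)‖₊ = 1 := by
      rw [← NNReal.coe_inj]
      exact ContinuousLinearMap.norm_id
    rw [this, inv_one]
    exact hK
  refine ⟨hf.toHomeomorph f hc, ?_, ?_⟩
  · change f c = p
    simp [f, g]
  · intro z hz
    change f z = z
    have h1 : r ≤ ‖z - c‖ := by
      rw [Metric.mem_ball, dist_eq_norm] at hz
      exact not_lt.1 hz
    have h2 : 1 - ‖z - c‖ / r ≤ 0 := by
      rw [sub_nonpos, one_le_div hr]; exact h1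
    have : g z = 0 := max_eq_left h2
    simp [f, this]

/-- Homogeneity of connected open sets of the plane. -/
theorem push_connected {U : Set Pt} (hU : IsOpen U) (hc : IsPreconnected U) {x y : Pt}
    (hx : x ∈ U) (hy : y ∈ U) :
    ∃ h : Homeomorph Pt Pt, h x = y ∧ ∀ z, z ∉ U → h z = z := by
  refine hc.induction₂ (fun x y => ∃ h : Homeomorph Pt Pt, h x = y ∧ ∀ z, z ∉ U → h z = z)
    ?_ ?_ ?_ hx hy
  · intro x hx
    obtain ⟨r, hr, hball⟩ := Metric.isOpen_iff.1 hU x hx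
    filter_upwards [mem_nhdsWithin_of_mem_nhds (Metric.ball_mem_nhds x hr)] with y hy
    obtain ⟨h, h1, h2⟩ := push_ball x y r (by simpa [dist_eq_norm] using hy)
    exact ⟨h, h1, fun z hz => h2 z fun hzb => hz (hball hzb)⟩
  · rintro x y z - - - ⟨h, h1, h2⟩ ⟨k, k1, k2⟩
    refine ⟨h.trans k, by simp [h1, k1], fun w hw => ?_⟩
    simp [h2 w hw, k2 w hw]
  · rintro x y - - ⟨h, h1, h2⟩
    refine ⟨h.symm, by rw [← h1]; simp, fun w hw => ?_⟩
    rw [Homeomorph.symm_apply_eq, h2 w hw]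

theorem drawingImage_mono {n : ℕ} (G : SimpleGraph (Fin n)) {S T : Set (Fin n)} (h : S ⊆ T)
    (D : RawDrawing n) : drawingImage n G S D ⊆ drawingImage n G T D := by
  rintro p (⟨v, hv, rfl⟩ | hp)
  · exact Or.inl ⟨v, h hv, rfl⟩
  · simp only [mem_iUnion] at hp
    obtain ⟨u, v, hu, hv, ha, hp⟩ := hp
    refine Or.inr ?_
    simp only [mem_iUnion]
    exact ⟨u, v, h hu, h hv, ha, hp⟩

theorem drawingImage_compact {n : ℕ} {G : SimpleGraph (Fin n)} (S : Set (Fin n))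
    {D : RawDrawing n} (hD : IsPlanarDrawing n G univ D) :
    IsCompact (drawingImage n G S D) := by
  refine ((S.toFinite.image _).isCompact).union ?_
  refine isCompact_iUnion fun u => isCompact_iUnion fun v => isCompact_iUnion fun _ =>
    isCompact_iUnion fun _ => isCompact_iUnion fun ha => ?_
  exact isCompact_Icc.image_of_continuousOn (hD.arc u trivial v trivial ha).1

theorem pos_not_mem_image {n : ℕ} {G : SimpleGraph (Fin n)} {S : Set (Fin n)}
    {D : RawDrawing n} (hD : IsPlanarDrawing n G univ D) {w : Fin n} (hw : w ∉ S) :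
    D.pos w ∉ drawingImage n G S D := by
  have hne : ∀ v ∈ S, D.pos v ≠ D.pos w := fun v hv he =>
    hw (hD.pos_inj (mem_univ v) (mem_univ w) he ▸ hv)
  rintro (⟨v, hv, he⟩ | hp)
  · exact hne v hv he
  · simp only [mem_iUnion] at hp
    obtain ⟨u, v, hu, hv, ha, t, ht, he⟩ := hp
    obtain ⟨-, -, h0, h1⟩ := hD.arc u trivial v trivial ha
    rcases eq_or_lt_of_le ht.1 with h | h
    · rw [← h, h0] at he; exact hne u hu he
    · rcases eq_or_lt_of_le ht.2 with h' | h'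
      · rw [h', h1] at he; exact hne v hv he
      · exact hD.vertex_off_arc u trivial v trivial ha w trivial ⟨t, ⟨h, h'⟩, he⟩

/-- A vertex outside `S` lies in the external region of the drawing restricted to `S`. -/
theorem pos_mem_unbounded {n : ℕ} {G : SimpleGraph (Fin n)} {S : Set (Fin n)}
    {D : RawDrawing n} (hD : IsOuterplanarDrawing n G D) {w : Fin n} (hw : w ∉ S) :
    D.pos w ∈ unboundedRegion (drawingImage n G S D) := by
  have hnot := pos_not_mem_image hD.1 hw
  have hopen : IsOpen (drawingImage n G S D)ᶜ :=
    (drawingImage_compact S hD.1).isClosed.isOpen_compl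
  refine ⟨hnot, ?_⟩
  have hnhds : connectedComponentIn (drawingImage n G S D)ᶜ (D.pos w) ∈ nhds (D.pos w) :=
    hopen.connectedComponentIn.mem_nhds (mem_connectedComponentIn hnot)
  obtain ⟨p, hp, hpu⟩ := mem_closure_iff_nhds.1 (hD.2 w) _ hnhds
  intro hb
  refine hpu.2 (hb.subset ?_)
  rw [connectedComponentIn_eq hp]
  exact connectedComponentIn_mono _
    (compl_subset_compl.2 (drawingImage_mono G (subset_univ S) D))

/-- Exchanging two vertices outside `S` by a homeomorphism fixing the drawing of `S`. -/
theorem exchange {n : ℕ} {G : SimpleGraph (Fin n)} (S : Set (Fin n))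
    {D : RawDrawing n} (hD : IsOuterplanarDrawing n G D) {a b : Fin n} (ha : a ∉ S)
    (hb : b ∉ S) :
    ∃ h : Homeomorph Pt Pt, h (D.pos b) = D.pos a ∧
      ∀ z ∈ drawingImage n G S D, h z = z := by
  have hcomp := drawingImage_compact S hD.1
  have h1 := unbounded_same_component hcomp.isBounded (pos_mem_unbounded hD hb)
    (pos_mem_unbounded hD ha)
  obtain ⟨h, hh, hfix⟩ := push_connected hcomp.isClosed.isOpen_compl.connectedComponentIn
    isPreconnected_connectedComponentIn
    (mem_connectedComponentIn (pos_not_mem_image hD.1 hb)) h1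
  exact ⟨h, hh, fun z hz => hfix z fun hz' => connectedComponentIn_subset _ _ hz' hz⟩

/-- Truncation to the unit interval. -/
noncomputable def clampUnit (t : ℝ) : ℝ := max 0 (min 1 t)

theorem clampUnit_mem (t : ℝ) : clampUnit t ∈ Icc (0 : ℝ) 1 :=
  ⟨le_max_left _ _, max_le zero_le_one (min_le_left _ _)⟩

theorem clampUnit_of_mem {t : ℝ} (ht : t ∈ Icc (0 : ℝ) 1) : clampUnit t = t := by
  rw [clampUnit, min_eq_right ht.2, max_eq_right ht.1]

theorem clampUnit_symm (t : ℝ) : clampUnit (1 - t) = 1 - clampUnit t := by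
  unfold clampUnit
  grind

/-- The image of a drawing under a homeomorphism of the plane. -/
noncomputable def pushDrawing {n : ℕ} (D : RawDrawing n) (φ : Homeomorph Pt Pt) :
    RawDrawing n where
  pos v := φ (D.pos v)
  curve u v t := φ (D.curve u v (clampUnit t))

theorem pushDrawing_image {n : ℕ} (D : RawDrawing n) (φ : Homeomorph Pt Pt) (u v : Fin n)
    {I : Set ℝ} (hI : I ⊆ Icc 0 1) :
    (pushDrawing D φ).curve u v '' I = φ '' (D.curve u v '' I) := by
  rw [image_image]
  refine image_congr fun t ht => ?_
  simp only [pushDrawing, clampUnit_of_mem (hI ht)]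

theorem pushDrawing_planar {n : ℕ} {G : SimpleGraph (Fin n)} {S : Set (Fin n)} {P : Set Pt}
    {D : RawDrawing n} (hD : IsPlanarDrawing n G univ D) (φ : Homeomorph Pt Pt)
    (hP : ∀ v ∈ S, φ (D.pos v) ∈ P) : IsPlanarDrawingOn n G S P (pushDrawing D φ) where
  pos_mem := hP
  pos_inj := fun u _ v _ h => hD.pos_inj (mem_univ u) (mem_univ v) (φ.injective h)
  curve_symm := by
    intro u v
    funext t
    simp only [pushDrawing, clampUnit_symm]
    rw [hD.curve_symm u v]
  arc := by
    intro u _ v _ ha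
    obtain ⟨h1, h2, h3, h4⟩ := hD.arc u trivial v trivial ha
    have heq : EqOn ((pushDrawing D φ).curve u v) (φ ∘ D.curve u v) (Icc 0 1) := by
      intro t ht
      simp only [pushDrawing, clampUnit_of_mem ht, Function.comp]
    refine ⟨(φ.continuous.comp_continuousOn h1).congr heq,
      (φ.injective.comp_injOn h2).congr heq.symm, ?_, ?_⟩
    · rw [heq (by simp)]; simp [h3, pushDrawing]
    · rw [heq (by simp)]; simp [h4, pushDrawing]
  vertex_off_arc := by
    intro u _ v _ ha w _ hw
    rw [arcInterior, pushDrawing_image D φ u v Ioo_subset_Icc_self] at hw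
    obtain ⟨z, hz, he⟩ := hw
    have : z = D.pos w := φ.injective he
    subst this
    exact hD.vertex_off_arc u trivial v trivial ha w trivial hz
  no_cross := by
    intro u _ v _ x _ y _ h1 h2 hne
    rw [arcInterior, arcInterior, pushDrawing_image D φ u v Ioo_subset_Icc_self,
      pushDrawing_image D φ x y Ioo_subset_Icc_self, ← image_inter φ.injective]
    have := hD.no_cross u trivial v trivial x trivial y trivial h1 h2 hne
    rw [arcInterior, arcInterior] at this
    rw [this, image_empty]

/-- One step of the construction. -/
theorem exists_step {n ω : ℕ} {G : SimpleGraph (Fin n)} {D : RawDrawing n} (hω : 1 ≤ ω)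
    (hD : IsOuterplanarDrawing n G D) (i : ℕ) :
    ∃ h : Homeomorph Pt Pt,
      (∀ z ∈ drawingImage n G (window n ω i ∩ window n ω (i + 1)) D, h z = z) ∧
      (∀ b : Fin n, b.val = i → ω ≤ i →
        ∃ a : Fin n, a ∈ window n ω i ∧ h (D.pos b) = D.pos a) := by
  by_cases hi : i < n ∧ ω ≤ i
  · obtain ⟨hin, hωi⟩ := hi
    have ha : (⟨i - ω, by omega⟩ : Fin n) ∉ window n ω i ∩ window n ω (i + 1) := by
      rintro ⟨-, h⟩
      have := h.2
      simp at this
      omega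
    have hb : (⟨i, hin⟩ : Fin n) ∉ window n ω i ∩ window n ω (i + 1) := by
      rintro ⟨h, -⟩
      have := h.1
      simp at this
    obtain ⟨h, h1, h2⟩ := exchange _ hD ha hb
    refine ⟨h, h2, ?_⟩
    intro b hbi _
    refine ⟨⟨i - ω, by omega⟩, ?_, ?_⟩
    · simp only [window, mem_ofPred_eq]; omega
    · rw [← h1]; congr 2; exact Fin.ext hbi
  · refine ⟨Homeomorph.refl _, fun z _ => rfl, ?_⟩
    intro b hb hωi
    exact absurd ⟨hb ▸ b.isLt, hωi⟩ hi

theorem supporting {n ω : ℕ} {G : SimpleGraph (Fin n)} (hω : 1 ≤ ω) (hωn : ω ≤ n)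
    (D : RawDrawing n) (hD : IsOuterplanarDrawing n G D) : IsSupportingDrawing n ω G D := by
  classical
  refine ⟨hD.1, ?_⟩
  choose ψ hfix hmove using fun i => exists_step (ω := ω) hω hD i
  -- `φ (i+1)` is `φ i` after the `i`-th exchange
  let φ : ℕ → Homeomorph Pt Pt := fun i =>
    Nat.rec (motive := fun _ => Homeomorph Pt Pt) (Homeomorph.refl Pt)
      (fun j f => if ω ≤ j then (ψ j).trans f else f) i
  have φ_zero : φ 0 = Homeomorph.refl Pt := rfl
  have φ_succ : ∀ j, φ (j + 1) = if ω ≤ j then (ψ j).trans (φ j) else φ j := fun j => rfl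
  have φ_small : ∀ j, j ≤ ω → φ j = Homeomorph.refl Pt := by
    intro j
    induction j with
    | zero => intro _; exact φ_zero
    | succ j ih =>
      intro hj
      rw [φ_succ, if_neg (by omega), ih (by omega)]
  have φ_eq : ∀ i, ∀ z ∈ drawingImage n G (window n ω i ∩ window n ω (i + 1)) D,
      φ (i + 1) z = φ i z := by
    intro i z hz
    rw [φ_succ]
    split_ifs
    · rw [Homeomorph.trans_apply, hfix i z hz]
    · rfl
  let P : Finset Pt := Finset.univ.image fun j : Fin ω => D.pos (Fin.castLE hωn j)
  have hPcard : P.card = ω + 0 := by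
    rw [Finset.card_image_of_injective]
    · simp
    · intro x y hxy
      exact Fin.castLE_injective hωn (hD.1.pos_inj (mem_univ _) (mem_univ _) hxy)
  have hPmem : ∀ v : Fin n, v.val < ω → D.pos v ∈ P := by
    intro v hv
    exact Finset.mem_image.2 ⟨⟨v, hv⟩, Finset.mem_univ _, rfl⟩
  have hpos : ∀ i, ∀ v ∈ window n ω i, φ i (D.pos v) ∈ P := by
    intro i
    induction i with
    | zero =>
      intro v hv
      exact absurd hv.1 (by omega)
    | succ i ih =>
      intro v hv
      by_cases hvi : v.val = i
      · by_cases hωi : ω ≤ i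
        · obtain ⟨a, ha, he⟩ := hmove i v hvi hωi
          rw [φ_succ, if_pos hωi, Homeomorph.trans_apply, he]
          exact ih a ha
        · rw [φ_small (i + 1) (by omega)]
          exact hPmem v (by omega)
      · have hv' : v ∈ window n ω i := by
          have h1 := hv.1
          have h2 := hv.2
          exact ⟨by omega, by omega⟩
        rw [φ_eq i _ (Or.inl ⟨v, ⟨hv', hv⟩, rfl⟩)]
        exact ih v hv'
  refine ⟨P, hPcard, ⟨fun i => pushDrawing D (φ i), ?_, ?_, ?_⟩, ?_⟩
  · intro i _ _
    exact pushDrawing_planar hD.1 (φ i) (hpos i)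
  · intro i hi _ v hv
    obtain ⟨j, rfl⟩ : ∃ j, i = j + 1 := ⟨i - 1, by omega⟩
    exact φ_eq j _ (Or.inl ⟨v, hv, rfl⟩)
  · intro i hi _ u hu v hv ha
    obtain ⟨j, rfl⟩ : ∃ j, i = j + 1 := ⟨i - 1, by omega⟩
    funext t
    refine φ_eq j _ (Or.inr ?_)
    simp only [mem_iUnion]
    exact ⟨u, v, hu, hv, ha, clampUnit t, clampUnit_mem t, rfl⟩
  · intro i _ _
    refine ⟨φ i, fun v _ => rfl, ?_, image_empty _⟩
    intro u _ v _ _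
    exact (pushDrawing_image D (φ i) u v subset_rfl).symm

/-- **Theorem 3.** Every minimal graph story `S = (G, ω, τ)` with
`G` outerplanar is realizable; moreover, every outerplanar embedding of `G` is
a supporting embedding for `S`. -/
theorem outerplanar_minimal_story_realizable
    (n ω : ℕ) (G : SimpleGraph (Fin n))
    (hω : 1 ≤ ω) (hωn : ω ≤ n) (hvis : Visible n ω G)
    (hout : Outerplanar n G) :
    Realizable n ω 0 G ∧
      ∀ Δ : RawDrawing n, IsOuterplanarDrawing n G Δ →
        IsSupportingDrawing n ω G Δ := by
  have hsup : ∀ Δ : RawDrawing n, IsOuterplanarDrawing n G Δ → IsSupportingDrawing n ω G Δ :=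
    fun Δ hΔ => supporting hω hωn Δ hΔ
  refine ⟨?_, hsup⟩
  obtain ⟨Δ, hΔ⟩ := hout
  obtain ⟨-, P, hP, R, -⟩ := hsup Δ hΔ
  exact ⟨P, hP, ⟨R⟩⟩

end GraphStories
end

section
/- For every integer ω ≥ 5, there exists a minimal graph story S = (G, ω, τ) such that G is a series-parallel graph and S is not realizable. For ω = 5 this is witnessed by an 8-vertex series-parallel graph all of whose four possible embeddings of G_5 lead to a graph G_7 in which the 3-cycle on vertices v_3, v_4, v_5 separates v_6 from v_7, or to a graph G_8 in which the 3-cycle on v_4, v_5, v_6 separates v_7 from v_8; for ω > 5 the same graph padded with ω − 5 isolated vertices inserted in τ works. -/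
open Set

namespace GraphStories

/-- `G` has a `K₄` minor: there are four pairwise disjoint connected branch
sets, pairwise joined by an edge of `G`. -/
def HasK4Minor {V : Type*} (G : SimpleGraph V) : Prop :=
  ∃ B : Fin 4 → Set V,
    (∀ i, (SimpleGraph.induce (B i) G).Connected) ∧
    (Pairwise fun i j => Disjoint (B i) (B j)) ∧
    ∀ i j, i ≠ j → ∃ u ∈ B i, ∃ v ∈ B j, G.Adj u v

/-- A series-parallel graph is a graph with no `K₄` minor. -/
def SeriesParallel {V : Type*} (G : SimpleGraph V) : Prop := ¬ HasK4Minor G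

theorem exists_clog_s9 {A : Type*} [TopologicalSpace A] [SimplyConnectedSpace A]
    [LocallyPathConnectedSpace A] [Inhabited A] (F : A → ℂ) (hF : Continuous F)
    (h0 : ∀ a, F a ≠ 0) : ∃ L : A → ℂ, Continuous L ∧ ∀ a, Complex.exp (L a) = F a := by
  obtain ⟨L, ⟨-, hL⟩, -⟩ := Complex.isCoveringMapOn_exp.existsUnique_continuousMap_lifts
    (⟨F, hF⟩ : C(A, ℂ)) (a₀ := default) (e₀ := Complex.log (F default))
    (Complex.exp_log (h0 _)) (fun a => h0 a)
  exact ⟨L, L.continuous, fun a => congrFun hL a⟩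

theorem clog_unique (L M : ℝ → ℂ) (hL : Continuous L) (hM : Continuous M)
    (h : ∀ s, Complex.exp (L s) = Complex.exp (M s)) : L 1 - L 0 = M 1 - M 0 := by
  have hex := Complex.isCoveringMapOn_exp.existsUnique_continuousMap_lifts
    (⟨fun s => Complex.exp (L s), by fun_prop⟩ : C(ℝ, ℂ)) (a₀ := 0) (e₀ := L 0) rfl
    (fun a => Complex.exp_ne_zero _)
  have := hex.unique (y₁ := ⟨L, hL⟩) (y₂ := ⟨fun s => M s + (L 0 - M 0), by fun_prop⟩)
    ⟨rfl, rfl⟩ ⟨by simp, by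
      funext s
      simp only [Function.comp, ContinuousMap.coe_mk, Complex.exp_add, Complex.exp_sub, h]
      field_simp [Complex.exp_ne_zero]⟩
  have h1 := congrArg (fun f : C(ℝ, ℂ) => f 1) this
  simp only [ContinuousMap.coe_mk] at h1
  rw [h1]; ring

open Classical in
/-- Total change of the logarithm along a nonvanishing path. -/
noncomputable def logChange (g : ℝ → ℂ) : ℂ :=
  if h : ∃ L : ℝ → ℂ, Continuous L ∧ ∀ s, Complex.exp (L s) = g s then
    h.choose 1 - h.choose 0 else 0

theorem logChange_eq (g L : ℝ → ℂ) (hL : Continuous L) (h : ∀ s, Complex.exp (L s) = g s) :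
    logChange g = L 1 - L 0 := by
  have hex : ∃ L : ℝ → ℂ, Continuous L ∧ ∀ s, Complex.exp (L s) = g s := ⟨L, hL, h⟩
  rw [logChange, dif_pos hex]
  exact clog_unique _ _ hex.choose_spec.1 hL (fun s => by rw [hex.choose_spec.2, h])

theorem logChange_square (e f : ℝ → ℂ) (he : Continuous e) (hf : Continuous f)
    (h : ∀ s t, e s ≠ f t) :
    logChange (fun s => e s - f 1) - logChange (fun s => e s - f 0) =
      logChange (fun t => f t - e 1) - logChange (fun t => f t - e 0) := by
  obtain ⟨L, hL, hLe⟩ := exists_clog_s9 (A := ℝ × ℝ) (fun x => e x.1 - f x.2) (by fun_prop)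
    (fun x => sub_ne_zero.2 (h _ _))
  have h1 : ∀ t, logChange (fun s => e s - f t) = L (1, t) - L (0, t) := fun t =>
    logChange_eq _ (fun s => L (s, t)) (by fun_prop) (fun s => hLe (s, t))
  have h2 : ∀ s, logChange (fun t => f t - e s) = L (s, 1) - L (s, 0) := fun s => by
    rw [logChange_eq _ (fun t => L (s, t) + Real.pi * Complex.I) (by fun_prop)]
    · ring
    · intro t
      rw [Complex.exp_add, Complex.exp_pi_mul_I, hLe]
      ring
  rw [h1, h1, h2, h2]; ring

theorem logChange_int (g : ℝ → ℂ) (hg : Continuous g) (h0 : ∀ s, g s ≠ 0) (x y : ℂ)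
    (hx : Complex.exp x = g 0) (hy : Complex.exp y = g 1) :
    ∃ n : ℤ, logChange g = y - x + n * (2 * Real.pi * Complex.I) := by
  obtain ⟨L, hL, hLe⟩ := exists_clog_s9 g hg h0
  rw [logChange_eq g L hL hLe]
  have : Complex.exp (L 1 - L 0) = Complex.exp (y - x) := by
    rw [Complex.exp_sub, Complex.exp_sub, hx, hy, hLe, hLe]
  exact Complex.exp_eq_exp_iff_exists_int.1 this

theorem no_K5 (p : Fin 5 → ℂ) (c : Fin 5 → Fin 5 → ℝ → ℂ)
    (hp : ∀ i j, i ≠ j → p i ≠ p j)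
    (hc : ∀ i j, i < j → Continuous (c i j))
    (h0 : ∀ i j, i < j → c i j 0 = p i) (h1 : ∀ i j, i < j → c i j 1 = p j)
    (hv : ∀ i j, i < j → ∀ k, k ≠ i → k ≠ j → ∀ s, c i j s ≠ p k)
    (hd : ∀ i j k l, i < j → k < l → i ≠ k → i ≠ l → j ≠ k → j ≠ l →
      ∀ s t, c i j s ≠ c k l t) : False := by
  let a : Fin 5 → Fin 5 → ℂ := fun u w =>
    if u < w then Complex.log (p u - p w) else Complex.log (p w - p u) + Real.pi * Complex.I
  have ha : ∀ u w, u ≠ w → Complex.exp (a u w) = p u - p w := by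
    intro u w huw
    simp only [a]
    split_ifs
    · exact Complex.exp_log (sub_ne_zero.2 (hp _ _ huw))
    · rw [Complex.exp_add, Complex.exp_pi_mul_I, Complex.exp_log (sub_ne_zero.2 (hp _ _ huw.symm))]
      ring
  let σ : Fin 5 → Fin 5 → ℤ := fun u w => if u < w then 1 else -1
  have hσ : ∀ u w, u ≠ w → a w u - a u w = σ u w * (Real.pi * Complex.I) := by
    intro u w huw
    simp only [a, σ]
    rcases lt_or_gt_of_ne huw with h | h
    · simp [h, h.not_gt]
    · simp [h, h.not_gt]
  have hn : ∀ i j k, ∃ n : ℤ, i < j → k ≠ i → k ≠ j →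
      logChange (fun s => c i j s - p k) = a j k - a i k + n * (2 * Real.pi * Complex.I) := by
    intro i j k
    by_cases h : i < j ∧ k ≠ i ∧ k ≠ j
    · obtain ⟨hij, hi, hj⟩ := h
      have hcc := hc i j hij
      obtain ⟨n, hn⟩ := logChange_int (fun s => c i j s - p k) (by fun_prop)
        (fun s => sub_ne_zero.2 (hv i j hij k hi hj s)) (a i k) (a j k)
        (by rw [ha _ _ hi.symm, h0 _ _ hij]) (by rw [ha _ _ hj.symm, h1 _ _ hij])
      exact ⟨n, fun _ _ _ => hn⟩
    · exact ⟨0, fun x y z => absurd ⟨x, y, z⟩ h⟩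
  choose n hn using hn
  have key : ∀ i j k l, i < j → k < l → i ≠ k → i ≠ l → j ≠ k → j ≠ l →
      2 * (n i j l - n i j k - n k l j + n k l i) = σ j l - σ i l - σ j k + σ i k := by
    intro i j k l hij hkl hik hil hjk hjl
    have h := logChange_square (c i j) (c k l) (hc _ _ hij) (hc _ _ hkl)
      (hd i j k l hij hkl hik hil hjk hjl)
    rw [h0 _ _ hij, h1 _ _ hij, h0 _ _ hkl, h1 _ _ hkl,
      hn i j l hij hil.symm hjl.symm, hn i j k hij hik.symm hjk.symm,
      hn k l j hkl hjk hjl, hn k l i hkl hik hil] at h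
    have e1 := hσ j l hjl
    have e2 := hσ i l hil
    have e3 := hσ j k hjk
    have e4 := hσ i k hik
    have hpi : (Real.pi * Complex.I : ℂ) ≠ 0 := by
      simp [Real.pi_ne_zero]
    have : ((2 * (n i j l - n i j k - n k l j + n k l i) : ℤ) : ℂ) =
        ((σ j l - σ i l - σ j k + σ i k : ℤ) : ℂ) := by
      apply mul_right_cancel₀ hpi
      push_cast
      linear_combination h + e1 - e2 - e3 + e4
    exact_mod_cast this
  have k1 := key 0 1 2 3 (by decide) (by decide) (by decide) (by decide) (by decide) (by decide)
  have k2 := key 0 1 2 4 (by decide) (by decide) (by decide) (by decide) (by decide) (by decide)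
  have k3 := key 0 1 3 4 (by decide) (by decide) (by decide) (by decide) (by decide) (by decide)
  have k4 := key 0 2 1 3 (by decide) (by decide) (by decide) (by decide) (by decide) (by decide)
  have k5 := key 0 2 1 4 (by decide) (by decide) (by decide) (by decide) (by decide) (by decide)
  have k6 := key 0 2 3 4 (by decide) (by decide) (by decide) (by decide) (by decide) (by decide)
  have k7 := key 0 3 1 2 (by decide) (by decide) (by decide) (by decide) (by decide) (by decide)
  have k8 := key 0 3 1 4 (by decide) (by decide) (by decide) (by decide) (by decide) (by decide)
  have k9 := key 0 3 2 4 (by decide) (by decide) (by decide) (by decide) (by decide) (by decide)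
  have k10 := key 0 4 1 2 (by decide) (by decide) (by decide) (by decide) (by decide) (by decide)
  have k11 := key 0 4 1 3 (by decide) (by decide) (by decide) (by decide) (by decide) (by decide)
  have k12 := key 0 4 2 3 (by decide) (by decide) (by decide) (by decide) (by decide) (by decide)
  have k13 := key 1 2 3 4 (by decide) (by decide) (by decide) (by decide) (by decide) (by decide)
  have k14 := key 1 3 2 4 (by decide) (by decide) (by decide) (by decide) (by decide) (by decide)
  have k15 := key 1 4 2 3 (by decide) (by decide) (by decide) (by decide) (by decide) (by decide)
  have v : ∀ u w, u < w → σ u w = 1 := fun u w h => if_pos h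
  have v' : ∀ u w, ¬ u < w → σ u w = -1 := fun u w h => if_neg h
  simp only [show ∀ u w, σ u w = if u < w then 1 else -1 from fun _ _ => rfl] at *
  simp (decide := true) only [if_true, if_false] at k1 k2 k3 k4 k5 k6 k7 k8 k9 k10 k11 k12 k13 k14 k15
  clear key hn ha hσ v v'
  omega

/-- A `K₄` minor all of whose branch sets lie in `S`. -/
def MinorIn {V : Type*} (G : SimpleGraph V) (S : Set V) : Prop :=
  ∃ B : Fin 4 → Set V,
    (∀ i, B i ⊆ S) ∧
    (∀ i, (SimpleGraph.induce (B i) G).Connected) ∧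
    (Pairwise fun i j => Disjoint (B i) (B j)) ∧
    ∀ i j, i ≠ j → ∃ u ∈ B i, ∃ v ∈ B j, G.Adj u v

theorem exists_nbr {V : Type*} (G : SimpleGraph V) (B : Set V)
    (h : (SimpleGraph.induce B G).Connected) (v u : V) (hv : v ∈ B) (hu : u ∈ B) (hne : u ≠ v) :
    ∃ c ∈ B, G.Adj v c := by
  obtain ⟨w⟩ := h.preconnected ⟨v, hv⟩ ⟨u, hu⟩
  cases w with
  | nil => exact absurd rfl hne
  | cons hadj _ => exact ⟨_, Subtype.coe_prop _, hadj⟩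

theorem connected_diff {V : Type*} (G : SimpleGraph V) (B : Set V)
    (h : (SimpleGraph.induce B G).Connected) (v c : V) (hc : c ∈ B) (hcv : c ≠ v)
    (hs : ∀ w ∈ B, G.Adj v w → w = c ∨ G.Adj w c) :
    (SimpleGraph.induce (B \ {v}) G).Connected := by
  classical
  have hcB : c ∈ B \ {v} := ⟨hc, hcv⟩
  have main : ∀ x y : B, (SimpleGraph.induce B G).Walk x y → ∀ (x' y' : ↥(B \ {v})),
      ((x : V) = x' ∨ ((x : V) = v ∧ (x' : V) = c)) →
      ((y : V) = y' ∨ ((y : V) = v ∧ (y' : V) = c)) →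
      (SimpleGraph.induce (B \ {v}) G).Reachable x' y' := by
    intro x y w
    induction w with
    | @nil z =>
      intro x' y' hx hy
      have : x' = y' := by
        apply Subtype.ext
        have := x'.2.2
        have := y'.2.2
        simp only [mem_singleton_iff] at *
        grind
      rw [this]
    | @cons x z y hadj w ih =>
      intro x' y' hx hy
      have hxz : G.Adj (x : V) z := hadj
      by_cases hz : (z : V) = v
      · have r := ih ⟨c, hcB⟩ y' (Or.inr ⟨hz, rfl⟩) hy
        refine SimpleGraph.Reachable.trans ?_ r
        rcases hx with hx | ⟨hx, hx'⟩
        · rw [hz, hx] at hxz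
          rcases hs _ x'.2.1 hxz.symm with e | e
          · rw [show x' = ⟨c, hcB⟩ from Subtype.ext e]
          · exact SimpleGraph.Adj.reachable (show G.Adj (x' : V) c from e)
        · rw [show x' = ⟨c, hcB⟩ from Subtype.ext hx']
      · have r := ih ⟨z, z.2, hz⟩ y' (Or.inl rfl) hy
        refine SimpleGraph.Reachable.trans ?_ r
        rcases hx with hx | ⟨hx, hx'⟩
        · rw [hx] at hxz
          exact SimpleGraph.Adj.reachable (show G.Adj (x' : V) z from hxz)
        · rw [hx] at hxz
          rcases hs _ z.2 hxz with e | e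
          · rw [show x' = ⟨(z : V), z.2, hz⟩ from Subtype.ext (hx'.trans e.symm)]
          · refine SimpleGraph.Adj.reachable (show G.Adj (x' : V) z from ?_)
            rw [hx']; exact e.symm
  refine (SimpleGraph.connected_iff_exists_forall_reachable _).2 ⟨⟨c, hcB⟩, fun y => ?_⟩
  obtain ⟨w⟩ := h.preconnected ⟨c, hc⟩ ⟨y, y.2.1⟩
  exact main _ _ w _ _ (Or.inl rfl) (Or.inl rfl)

theorem minorIn_diff {V : Type*} (G : SimpleGraph V) (S : Set V) (v : V)
    (hs : ∀ w ∈ S, ∀ w' ∈ S, G.Adj v w → G.Adj v w' → w = w' ∨ G.Adj w w')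
    (hdeg : ∃ a b, ∀ w ∈ S, G.Adj v w → w = a ∨ w = b)
    (h : MinorIn G S) : MinorIn G (S \ {v}) := by
  obtain ⟨B, hS, hconn, hdis, hadj⟩ := h
  have hdis' : ∀ i j x, x ∈ B i → x ∈ B j → i = j := by
    intro i j x hi hj
    by_contra hne
    exact Set.disjoint_left.1 (hdis hne) hi hj
  have hnb : ∀ i, v ∈ B i → ∃ c ∈ B i, G.Adj v c := by
    intro i hv
    by_contra hno
    have hall : ∀ j, j ≠ i → ∃ w ∈ B j, G.Adj v w := by
      intro j hj
      obtain ⟨u, hu, w, hw, huw⟩ := hadj i j hj.symm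
      by_cases huv : u = v
      · exact ⟨w, hw, huv ▸ huw⟩
      · exact absurd (exists_nbr G (B i) (hconn i) v u hv hu huv) hno
    obtain ⟨a, b, hab⟩ := hdeg
    obtain ⟨j, k, l, hj, hk, hl, hjk, hjl, hkl⟩ :
        ∃ j k l : Fin 4, j ≠ i ∧ k ≠ i ∧ l ≠ i ∧ j ≠ k ∧ j ≠ l ∧ k ≠ l :=
      (by decide : ∀ i : Fin 4,
        ∃ j k l : Fin 4, j ≠ i ∧ k ≠ i ∧ l ≠ i ∧ j ≠ k ∧ j ≠ l ∧ k ≠ l) i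
    obtain ⟨x, hx, hvx⟩ := hall j hj
    obtain ⟨y, hy, hvy⟩ := hall k hk
    obtain ⟨z, hz, hvz⟩ := hall l hl
    have hxy : x ≠ y := fun e => hjk (hdis' _ _ x hx (e ▸ hy))
    have hxz : x ≠ z := fun e => hjl (hdis' _ _ x hx (e ▸ hz))
    have hyz : y ≠ z := fun e => hkl (hdis' _ _ y hy (e ▸ hz))
    have := hab x (hS _ hx) hvx
    have := hab y (hS _ hy) hvy
    have := hab z (hS _ hz) hvz
    grind
  have hedge : ∀ i j, i ≠ j → ∀ w ∈ B j, v ∈ B i → G.Adj v w → ∃ c ∈ B i \ {v}, G.Adj c w := by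
    intro i j hij w hw hv hvw
    obtain ⟨c, hc, hvc⟩ := hnb i hv
    refine ⟨c, ⟨hc, hvc.ne'⟩, ?_⟩
    rcases hs c (hS _ hc) w (hS _ hw) hvc hvw with e | e
    · exact absurd (hdis' _ _ c hc (e ▸ hw)) hij
    · exact e
  refine ⟨fun i => B i \ {v}, fun i => sdiff_subset_sdiff_left (hS i), fun i => ?_, fun i j hij =>
    (hdis hij).mono sdiff_subset sdiff_subset, fun i j hij => ?_⟩
  · by_cases hv : v ∈ B i
    · obtain ⟨c, hc, hvc⟩ := hnb i hv
      exact connected_diff G (B i) (hconn i) v c hc hvc.ne'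
        (fun w hw hvw => hs w (hS _ hw) c (hS _ hc) hvw hvc)
    · show (SimpleGraph.induce (B i \ {v}) G).Connected
      rw [sdiff_singleton_eq_self hv]; exact hconn i
  · obtain ⟨u, hu, w, hw, huw⟩ := hadj i j hij
    by_cases h1 : u = v
    · subst h1
      obtain ⟨c, hc, hcw⟩ := hedge i j hij w hw hu huw
      exact ⟨c, hc, w, ⟨hw, huw.ne'⟩, hcw⟩
    · by_cases h2 : w = v
      · subst h2
        obtain ⟨c, hc, hcw⟩ := hedge j i hij.symm u hu hw huw.symm
        exact ⟨u, ⟨hu, h1⟩, c, hc, hcw.symm⟩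
      · exact ⟨u, ⟨hu, h1⟩, w, ⟨hw, h2⟩, huw⟩

/-- Adjacency of the 8-vertex core graph. -/
def coreRel (a b : Fin 8) : Bool :=
  (a, b) ∈ ([(0, 2), (1, 3), (1, 4), (2, 3), (2, 4), (3, 4), (3, 5), (4, 5), (5, 6), (6, 7),
   (2, 0), (3, 1), (4, 1), (3, 2), (4, 2), (4, 3), (5, 3), (5, 4), (6, 5), (7, 6)] : List (Fin 8 × Fin 8))

def core : SimpleGraph (Fin 8) where
  Adj a b := coreRel a b = true
  symm := ⟨by decide⟩
  loopless := ⟨by decide⟩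

instance : DecidableRel core.Adj := fun a b => inferInstanceAs (Decidable (coreRel a b = true))

theorem core_step {V : Type*} (f : Fin 8 ↪ V) (T T' : Finset (Fin 8)) (v : Fin 8)
    (hT : T' = T.erase v)
    (hs : ∀ w ∈ T, ∀ w' ∈ T, core.Adj v w → core.Adj v w' → w = w' ∨ core.Adj w w')
    (hdeg : ∃ a b, ∀ w ∈ T, core.Adj v w → w = a ∨ w = b)
    (h : MinorIn (core.map f) (f '' T)) : MinorIn (core.map f) (f '' T') := by
  have e : f '' (T' : Set (Fin 8)) = f '' T \ {f v} := by
    rw [hT, Finset.coe_erase, image_sdiff f.injective, image_singleton]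
  rw [e]
  refine minorIn_diff _ _ _ ?_ ?_ h
  · rintro _ ⟨w, hw, rfl⟩ _ ⟨w', hw', rfl⟩ h1 h2
    rw [SimpleGraph.map_adj_apply] at h1 h2 ⊢
    rcases hs w hw w' hw' h1 h2 with e | e
    · exact Or.inl (by rw [e])
    · exact Or.inr e
  · obtain ⟨a, b, hab⟩ := hdeg
    refine ⟨f a, f b, ?_⟩
    rintro _ ⟨w, hw, rfl⟩ h1
    rw [SimpleGraph.map_adj_apply] at h1
    rcases hab w hw h1 with e | e <;> simp [e]

theorem core_sp {V : Type*} (f : Fin 8 ↪ V) (h : MinorIn (core.map f) univ) : False := by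
  have h0 : MinorIn (core.map f) (f '' ((Finset.univ : Finset (Fin 8)) : Set (Fin 8))) := by
    obtain ⟨B, -, hconn, hdis, hadj⟩ := h
    refine ⟨B, fun i v hv => ?_, hconn, hdis, hadj⟩
    have : ∃ w, (core.map f).Adj v w := by
      obtain ⟨j, hj⟩ : ∃ j, j ≠ i := exists_ne i
      obtain ⟨u, hu, w, hw, huw⟩ := hadj i j hj.symm
      by_cases huv : u = v
      · exact ⟨w, huv ▸ huw⟩
      · obtain ⟨c, -, hc⟩ := exists_nbr _ (B i) (hconn i) v u hv hu huv
        exact ⟨c, hc⟩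
    obtain ⟨w, hw⟩ := this
    obtain ⟨a, b, -, rfl, rfl⟩ := (SimpleGraph.map_adj _ _ _ _).1 hw
    exact ⟨a, by simp, rfl⟩
  have h1 := core_step f _ {1, 2, 3, 4, 5, 6, 7} 0 (by decide) (by decide) (by decide) h0
  have h2 := core_step f _ {1, 2, 3, 4, 5, 6} 7 (by decide) (by decide) (by decide) h1
  have h3 := core_step f _ {1, 2, 3, 4, 5} 6 (by decide) (by decide) (by decide) h2
  have h4 := core_step f _ {1, 2, 3, 4} 5 (by decide) (by decide) (by decide) h3
  have h5 := core_step f _ {2, 3, 4} 1 (by decide) (by decide) (by decide) h4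
  have h6 := core_step f _ {3, 4} 2 (by decide) (by decide) (by decide) h5
  have h7 := core_step f _ {4} 3 (by decide) (by decide) (by decide) h6
  have h8 := core_step f _ ∅ 4 (by decide) (by decide) (by decide) h7
  obtain ⟨B, hS, hconn, -⟩ := h8
  obtain ⟨x⟩ := (hconn 0).nonempty
  have := hS 0 x.2
  simp at this

/-- Position in the padded story of the vertices of the core graph. -/
def coreEmb (ω : ℕ) (hω : 5 ≤ ω) : Fin 8 ↪ Fin (ω + 3) where
  toFun a := ⟨if a.val < 5 then a.val else ω + a.val - 5, by split_ifs <;> omega⟩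
  inj' := by
    intro a b h
    simp only [Fin.mk.injEq] at h
    ext
    split_ifs at h <;> omega

theorem coreEmb_val (ω : ℕ) (hω : 5 ≤ ω) (a : Fin 8) :
    (coreEmb ω hω a).val = if a.val < 5 then a.val else ω + a.val - 5 := rfl

theorem coreEmb_window (ω : ℕ) (hω : 5 ≤ ω) (a : Fin 8) (r : ℕ)
    (h1 : a.val ≤ r + 4) (h2 : r ≤ a.val) (hr : r ≤ 3) :
    coreEmb ω hω a ∈ window (ω + 3) ω (ω + r) := by
  simp only [window, mem_ofPred_eq, coreEmb_val]
  split_ifs <;> omega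

theorem core_visible (ω : ℕ) (hω : 5 ≤ ω) : Visible (ω + 3) ω (core.map (coreEmb ω hω)) := by
  intro u v h
  obtain ⟨a, b, hab, rfl, rfl⟩ := (SimpleGraph.map_adj _ _ _ _).1 h
  have : ∀ a b : Fin 8, core.Adj a b → a.val < b.val + 5 ∧ b.val < a.val + 5 := by decide
  have := this a b hab
  simp only [coreEmb_val]
  split_ifs <;> omega

section story
variable {n ω : ℕ} {G : SimpleGraph (Fin n)} {P : Set Pt} (R : Realization n ω G P)

theorem window_mid {i j k : ℕ} (v : Fin n) (hij : i ≤ j) (hjk : j ≤ k)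
    (h1 : v ∈ window n ω i) (h2 : v ∈ window n ω k) : v ∈ window n ω j := by
  simp only [window, mem_ofPred_eq] at *
  omega

theorem pos_const {i j : ℕ} (hi : 1 ≤ i) (hij : i ≤ j) (hj : j ≤ n) (v : Fin n)
    (h1 : v ∈ window n ω i) (h2 : v ∈ window n ω j) : (R.Γ j).pos v = (R.Γ i).pos v := by
  induction j, hij using Nat.le_induction with
  | base => rfl
  | succ j hij ih =>
    have hm := window_mid v hij (Nat.le_succ j) h1 h2
    rw [← ih (by omega) hm]
    exact R.pos_eq (j + 1) (by omega) hj v ⟨hm, h2⟩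

theorem curve_const {i j : ℕ} (hi : 1 ≤ i) (hij : i ≤ j) (hj : j ≤ n) (u v : Fin n)
    (huv : G.Adj u v)
    (h1 : u ∈ window n ω i) (h2 : u ∈ window n ω j)
    (h3 : v ∈ window n ω i) (h4 : v ∈ window n ω j) :
    (R.Γ j).curve u v = (R.Γ i).curve u v := by
  induction j, hij using Nat.le_induction with
  | base => rfl
  | succ j hij ih =>
    have hm := window_mid u hij (Nat.le_succ j) h1 h2
    have hm' := window_mid v hij (Nat.le_succ j) h3 h4
    rw [← ih (by omega) hm hm']
    exact R.curve_eq (j + 1) (by omega) hj u ⟨hm, h2⟩ v ⟨hm', h4⟩ huv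

end story

/-- Entry time (counted from `ω`) of the core vertex `a`. -/
def entry (a : Fin 8) : ℕ := a.val - 4

section coreStory
variable {ω : ℕ} {hω : 5 ≤ ω} {P : Finset Pt}
  (R : Realization (ω + 3) ω (core.map (coreEmb ω hω)) ↑P)

/-- Position of the core vertex `a`. -/
def cpos (a : Fin 8) : Pt := (R.Γ (ω + entry a)).pos (coreEmb ω hω a)

/-- Curve of the core edge `a b`. -/
def ccurve (a b : Fin 8) : ℝ → Pt :=
  (R.Γ (ω + max (entry a) (entry b))).curve (coreEmb ω hω a) (coreEmb ω hω b)

theorem cpos_eq (a : Fin 8) (r : ℕ) (hr : r ≤ 3) (h1 : a.val ≤ r + 4) (h2 : r ≤ a.val) :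
    (R.Γ (ω + r)).pos (coreEmb ω hω a) = cpos R a := by
  have := a.2
  apply pos_const R
  · omega
  · simp only [entry]; omega
  · omega
  · apply coreEmb_window <;> simp only [entry] <;> omega
  · apply coreEmb_window <;> omega

theorem ccurve_eq (a b : Fin 8) (r : ℕ) (hr : r ≤ 3) (hab : core.Adj a b)
    (h1 : a.val ≤ r + 4) (h2 : r ≤ a.val)
    (h3 : b.val ≤ r + 4) (h4 : r ≤ b.val) :
    (R.Γ (ω + r)).curve (coreEmb ω hω a) (coreEmb ω hω b) = ccurve R a b := by
  have := a.2
  have := b.2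
  apply curve_const R
  · omega
  · simp only [entry]; omega
  · omega
  · exact (SimpleGraph.map_adj_apply).2 hab
  · apply coreEmb_window <;> simp only [entry] <;> omega
  · apply coreEmb_window <;> omega
  · apply coreEmb_window <;> simp only [entry] <;> omega
  · apply coreEmb_window <;> omega

theorem cpos_ne (a b : Fin 8) (r : ℕ) (hr : r ≤ 3) (hab : a ≠ b)
    (h1 : a.val ≤ r + 4) (h2 : r ≤ a.val)
    (h3 : b.val ≤ r + 4) (h4 : r ≤ b.val) : cpos R a ≠ cpos R b := by
  rw [← cpos_eq R a r hr h1 h2, ← cpos_eq R b r hr h3 h4]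
  intro h
  exact hab ((coreEmb ω hω).injective ((R.planar (ω + r) (by omega) (by omega)).pos_inj
    (coreEmb_window _ _ _ _ h1 h2 hr) (coreEmb_window _ _ _ _ h3 h4 hr) h))

theorem ccurve_arc (a b : Fin 8) (r : ℕ) (hr : r ≤ 3) (hab : core.Adj a b)
    (h1 : a.val ≤ r + 4) (h2 : r ≤ a.val)
    (h3 : b.val ≤ r + 4) (h4 : r ≤ b.val) :
    IsArcFrom (ccurve R a b) (cpos R a) (cpos R b) := by
  rw [← cpos_eq R a r hr h1 h2, ← cpos_eq R b r hr h3 h4, ← ccurve_eq R a b r hr hab h1 h2 h3 h4]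
  exact (R.planar (ω + r) (by omega) (by omega)).arc _ (coreEmb_window _ _ _ _ h1 h2 hr) _
    (coreEmb_window _ _ _ _ h3 h4 hr) ((SimpleGraph.map_adj_apply).2 hab)

theorem ccurve_off (a b c : Fin 8) (r : ℕ) (hr : r ≤ 3) (hab : core.Adj a b)
    (hca : c ≠ a) (hcb : c ≠ b)
    (h1 : a.val ≤ r + 4) (h2 : r ≤ a.val)
    (h3 : b.val ≤ r + 4) (h4 : r ≤ b.val)
    (h5 : c.val ≤ r + 4) (h6 : r ≤ c.val) (s : ℝ) (hs : s ∈ Icc (0 : ℝ) 1) :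
    ccurve R a b s ≠ cpos R c := by
  have harc := ccurve_arc R a b r hr hab h1 h2 h3 h4
  rcases eq_or_lt_of_le hs.1 with h0 | h0
  · rw [← h0, harc.2.2.1]
    exact cpos_ne R a c r hr hca.symm h1 h2 h5 h6
  rcases eq_or_lt_of_le hs.2 with h0' | h0'
  · rw [h0', harc.2.2.2]
    exact cpos_ne R b c r hr hcb.symm h3 h4 h5 h6
  intro h
  have := (R.planar (ω + r) (by omega) (by omega)).vertex_off_arc _
    (coreEmb_window _ _ _ _ h1 h2 hr) _
    (coreEmb_window _ _ _ _ h3 h4 hr) ((SimpleGraph.map_adj_apply).2 hab) _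
    (coreEmb_window ω hω _ _ h5 h6 hr)
  rw [cpos_eq R c r hr h5 h6, ccurve_eq R a b r hr hab h1 h2 h3 h4] at this
  exact this ⟨s, ⟨h0, h0'⟩, h⟩

theorem ccurve_disj (a b c d : Fin 8) (r : ℕ) (hr : r ≤ 3) (hab : core.Adj a b)
    (hcd : core.Adj c d)
    (hca : c ≠ a) (hcb : c ≠ b) (hda : d ≠ a) (hdb : d ≠ b)
    (h1 : a.val ≤ r + 4) (h2 : r ≤ a.val)
    (h3 : b.val ≤ r + 4) (h4 : r ≤ b.val)
    (h5 : c.val ≤ r + 4) (h6 : r ≤ c.val)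
    (h7 : d.val ≤ r + 4) (h8 : r ≤ d.val) (s t : ℝ) (hs : s ∈ Icc (0 : ℝ) 1)
    (ht : t ∈ Icc (0 : ℝ) 1) :
    ccurve R a b s ≠ ccurve R c d t := by
  have harc := ccurve_arc R a b r hr hab h1 h2 h3 h4
  have harc' := ccurve_arc R c d r hr hcd h5 h6 h7 h8
  rcases eq_or_lt_of_le ht.1 with k0 | k0
  · rw [← k0, harc'.2.2.1]
    exact ccurve_off R a b c r hr hab hca hcb h1 h2 h3 h4 h5 h6 s hs
  rcases eq_or_lt_of_le ht.2 with k0' | k0'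
  · rw [k0', harc'.2.2.2]
    exact ccurve_off R a b d r hr hab hda hdb h1 h2 h3 h4 h7 h8 s hs
  rcases eq_or_lt_of_le hs.1 with h0 | h0
  · rw [← h0, harc.2.2.1]
    exact (ccurve_off R c d a r hr hcd hca.symm hda.symm h5 h6 h7 h8 h1 h2 t ht).symm
  rcases eq_or_lt_of_le hs.2 with h0' | h0'
  · rw [h0', harc.2.2.2]
    exact (ccurve_off R c d b r hr hcd hcb.symm hdb.symm h5 h6 h7 h8 h3 h4 t ht).symm
  intro h
  have inj := (coreEmb ω hω).injective
  have := (R.planar (ω + r) (by omega) (by omega)).no_cross _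
    (coreEmb_window _ _ _ _ h1 h2 hr) _
    (coreEmb_window _ _ _ _ h3 h4 hr) _
    (coreEmb_window _ _ _ _ h5 h6 hr) _
    (coreEmb_window _ _ _ _ h7 h8 hr) ((SimpleGraph.map_adj_apply).2 hab)
    ((SimpleGraph.map_adj_apply).2 hcd) (by
      rw [Ne, Sym2.eq_iff]
      rintro (⟨e, -⟩ | ⟨e, -⟩)
      · exact hca (inj e).symm
      · exact hda (inj e).symm)
  rw [ccurve_eq R a b r hr hab h1 h2 h3 h4, ccurve_eq R c d r hr hcd h5 h6 h7 h8] at this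
  have hmem : ccurve R c d t ∈ arcInterior (ccurve R a b) ∩ arcInterior (ccurve R c d) :=
    ⟨⟨s, ⟨h0, h0'⟩, h⟩, ⟨t, ⟨k0, k0'⟩, rfl⟩⟩
  rw [this] at hmem
  exact hmem

/-- The vertex entering at time `ω + r + 1` takes the position of the vertex that leaves. -/
theorem cpos_shift (hP : P.card = ω) (r : ℕ) (hr : r ≤ 2) (a b : Fin 8) (ha : a.val = r)
    (hb : b.val = r + 5) : cpos R b = cpos R a := by
  classical
  have hav : (coreEmb ω hω a).val = r := by rw [coreEmb_val, if_pos (by omega), ha]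
  have hbv : (coreEmb ω hω b).val = ω + r := by rw [coreEmb_val, if_neg (by omega), hb]; omega
  rw [← cpos_eq R a r (by omega) (by omega) (by omega),
    ← cpos_eq R b (r + 1) (by omega) (by omega) (by omega)]
  have pl := R.planar (ω + r) (by omega) (by omega)
  have pl' := R.planar (ω + (r + 1)) (by omega) (by omega)
  -- the window at time `ω + r`
  let W : Finset (Fin (ω + 3)) := Finset.univ.filter (fun j => r ≤ j.val ∧ j.val < ω + r)
  have hW : ∀ j, j ∈ W ↔ j ∈ window (ω + 3) ω (ω + r) := by
    intro j
    simp only [W, Finset.mem_filter, Finset.mem_univ, true_and, window, mem_ofPred_eq]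
    omega
  have hWc : W.card = ω := by
    have : W.map Fin.valEmbedding = Finset.Ico r (ω + r) := by
      ext x
      simp only [W, Finset.mem_map, Finset.mem_filter, Finset.mem_univ, true_and,
        Fin.valEmbedding_apply, Finset.mem_Ico]
      constructor
      · rintro ⟨j, hj, rfl⟩; omega
      · intro hx; exact ⟨⟨x, by omega⟩, hx, rfl⟩
    rw [← Finset.card_map Fin.valEmbedding, this, Nat.card_Ico]; omega
  have himg : W.image (R.Γ (ω + r)).pos = P := by
    apply Finset.eq_of_subset_of_card_le
    · intro x hx
      obtain ⟨j, hj, rfl⟩ := Finset.mem_image.1 hx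
      exact pl.pos_mem j ((hW j).1 hj)
    · rw [Finset.card_image_of_injOn, hWc, hP]
      intro x hx y hy h
      exact pl.pos_inj ((hW x).1 hx) ((hW y).1 hy) h
  have hbw : coreEmb ω hω b ∈ window (ω + 3) ω (ω + (r + 1)) := coreEmb_window _ _ _ _ (by omega) (by omega) (by omega)
  have hm : (R.Γ (ω + (r + 1))).pos (coreEmb ω hω b) ∈ P := pl'.pos_mem _ hbw
  obtain ⟨j, hj, hje⟩ := Finset.mem_image.1 ((Finset.ext_iff.1 himg _).2 hm)
  have hjw := (hW j).1 hj
  by_cases hja : j = coreEmb ω hω a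
  · rw [← hje, hja]
  · exfalso
    have hne : j.val ≠ r := fun h => hja (Fin.ext (h.trans hav.symm))
    simp only [W, Finset.mem_filter, Finset.mem_univ, true_and] at hj
    have hjw' : j ∈ window (ω + 3) ω (ω + (r + 1)) := by
      simp only [window, mem_ofPred_eq]; omega
    rw [← pos_const R (by omega) (show ω + r ≤ ω + (r + 1) by omega) (by omega) j hjw hjw'] at hje
    have := congrArg Fin.val (pl'.pos_inj hjw' hbw hje)
    omega

/-- Source of the arc joining points `i < j`. -/
def src (i j : Fin 5) : Fin 8 :=
  if i = 0 ∧ j ≠ 2 then 5 else if i = 1 ∧ j = 2 then 6 else i.castLE (by decide)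

/-- Target of the arc joining points `i < j`. -/
def dst (i j : Fin 5) : Fin 8 :=
  if i = 0 ∧ j = 1 then 6 else if i = 1 ∧ j = 2 then 7 else j.castLE (by decide)

/-- The core vertex `a` is visible at time `ω + r`. -/
def inWin (a : Fin 8) (r : Fin 4) : Prop := a.val ≤ r.val + 4 ∧ r.val ≤ a.val

instance (a : Fin 8) (r : Fin 4) : Decidable (inWin a r) :=
  inferInstanceAs (Decidable (_ ∧ _))

theorem pair_window : ∀ i j k l : Fin 5, i < j → k < l → i ≠ k → i ≠ l → j ≠ k → j ≠ l →
    ∃ r : Fin 4, (inWin (src i j) r ∧ inWin (dst i j) r) ∧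
      inWin (src k l) r ∧ inWin (dst k l) r := by
  decide

theorem cpos_mod (hP : P.card = ω) (a : Fin 8) (i : Fin 5) (h : a.val % 5 = i.val) :
    cpos R a = cpos R (i.castLE (by decide)) := by
  have := a.2
  have := i.2
  by_cases ha : a.val < 5
  · congr 1; ext; simp; omega
  · exact cpos_shift R hP i.val (by omega) _ _ (by simp) (by omega)

theorem core_unrealizable {ω : ℕ} {hω : 5 ≤ ω} {P : Finset Pt}
    (R : Realization (ω + 3) ω (core.map (coreEmb ω hω)) ↑P) (hP : P.card = ω) : False := by
  let T : Pt → ℂ := fun x => ⟨x.1, x.2⟩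
  have hT : Continuous T := by
    have : T = fun x => Complex.equivRealProdCLM.symm x := by
      funext x; rfl
    rw [this]; fun_prop
  have hTi : ∀ x y, T x = T y → x = y := fun x y h =>
    Prod.ext (congrArg Complex.re h) (congrArg Complex.im h)
  let g : ℝ → ℝ := fun s => (projIcc (0 : ℝ) 1 zero_le_one s : ℝ)
  have hg : Continuous g := continuous_subtype_val.comp continuous_projIcc
  have hgI : ∀ s, g s ∈ Icc (0 : ℝ) 1 := fun s => (projIcc (0 : ℝ) 1 zero_le_one s).2
  have hg0 : g 0 = 0 := by simp [g]
  have hg1 : g 1 = 1 := by simp [g]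
  have adj : ∀ i j : Fin 5, i < j → core.Adj (src i j) (dst i j) := by decide
  have ms : ∀ i j : Fin 5, i < j → (src i j).val % 5 = i.val := by decide
  have md : ∀ i j : Fin 5, i < j → (dst i j).val % 5 = j.val := by decide
  have arc : ∀ i j : Fin 5, i < j →
      IsArcFrom (ccurve R (src i j) (dst i j)) (cpos R (i.castLE (by decide)))
        (cpos R (j.castLE (by decide))) := by
    intro i j hij
    have : ∀ i j : Fin 5, i < j → ∃ r : Fin 4, (src i j).val ≤ r + 4 ∧ r.val ≤ (src i j).val ∧
      (dst i j).val ≤ r + 4 ∧ r.val ≤ (dst i j).val := by decide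
    obtain ⟨r, e1, e2, e3, e4⟩ := this i j hij
    rw [← cpos_mod R hP _ _ (ms i j hij), ← cpos_mod R hP _ _ (md i j hij)]
    exact ccurve_arc R _ _ r (by omega) (adj i j hij) e1 e2 e3 e4
  have disj : ∀ i j k l : Fin 5, i < j → k < l → i ≠ k → i ≠ l → j ≠ k → j ≠ l →
      ∀ s ∈ Icc (0 : ℝ) 1, ∀ t ∈ Icc (0 : ℝ) 1,
      ccurve R (src i j) (dst i j) s ≠ ccurve R (src k l) (dst k l) t := by
    intro i j k l hij hkl hik hil hjk hjl s hs t ht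
    obtain ⟨r, ⟨⟨e1, e2⟩, e3, e4⟩, ⟨e5, e6⟩, e7, e8⟩ :=
      pair_window i j k l hij hkl hik hil hjk hjl
    have a1 := ms i j hij
    have a2 := md i j hij
    have a3 := ms k l hkl
    have a4 := md k l hkl
    refine ccurve_disj R _ _ _ _ r (by omega) (adj i j hij) (adj k l hkl) ?_ ?_ ?_ ?_
      e1 e2 e3 e4 e5 e6 e7 e8 s t hs ht
    · intro h; rw [h, a1] at a3; exact hik (Fin.ext a3)
    · intro h; rw [h, a2] at a3; exact hjk (Fin.ext a3)
    · intro h; rw [h, a1] at a4; exact hil (Fin.ext a4)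
    · intro h; rw [h, a2] at a4; exact hjl (Fin.ext a4)
  have z0 : (0 : ℝ) ∈ Icc (0 : ℝ) 1 := by simp
  have z1 : (1 : ℝ) ∈ Icc (0 : ℝ) 1 := by simp
  refine no_K5 (fun i => T (cpos R (i.castLE (by decide))))
    (fun i j s => T (ccurve R (src i j) (dst i j) (g s))) ?_ ?_ ?_ ?_ ?_ ?_
  · intro i j hij h
    refine cpos_ne R _ _ 0 (by omega) ?_ ?_ ?_ ?_ ?_ (hTi _ _ h)
    · intro h; exact hij (Fin.castLE_injective _ h)
    all_goals simp
    all_goals omega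
  · intro i j hij
    exact hT.comp ((arc i j hij).1.comp_continuous hg hgI)
  · intro i j hij
    simp only [hg0, (arc i j hij).2.2.1]
  · intro i j hij
    simp only [hg1, (arc i j hij).2.2.2]
  · intro i j hij k hki hkj s h
    have h := hTi _ _ h
    obtain ⟨l, hli, hlj, hlk⟩ : ∃ l : Fin 5, l ≠ i ∧ l ≠ j ∧ l ≠ k :=
      (by decide : ∀ i j k : Fin 5, ∃ l : Fin 5, l ≠ i ∧ l ≠ j ∧ l ≠ k) i j k
    rcases lt_or_gt_of_ne hlk with e | e
    · rw [← (arc l k e).2.2.2] at h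
      exact disj i j l k hij e hli.symm hki.symm hlj.symm hkj.symm _ (hgI s) _ z1 h
    · rw [← (arc k l e).2.2.1] at h
      exact disj i j k l hij e hki.symm hli.symm hkj.symm hlj.symm _ (hgI s) _ z0 h
  · intro i j k l hij hkl hik hil hjk hjl s t h
    exact disj i j k l hij hkl hik hil hjk hjl _ (hgI s) _ (hgI t) (hTi _ _ h)

end coreStory

/-- **Lemma 4.** For every `ω ≥ 5` there exists a minimal graph
story `S = (G, ω, τ)` such that `G` is a series-parallel graph and `S` is not
realizable. -/
theorem exists_unrealizable_series_parallel_minimal_story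
    (ω : ℕ) (hω : 5 ≤ ω) :
    ∃ (n : ℕ) (G : SimpleGraph (Fin n)),
      ω ≤ n ∧ Visible n ω G ∧ SeriesParallel G ∧ ¬ Realizable n ω 0 G := by
  refine ⟨ω + 3, core.map (coreEmb ω hω), by omega, core_visible ω hω, ?_, ?_⟩
  · rintro ⟨B, h1, h2, h3⟩
    exact core_sp (coreEmb ω hω) ⟨B, fun i => subset_univ _, h1, h2, h3⟩
  · rintro ⟨P, hP, ⟨R⟩⟩
    exact core_unrealizable R hP

end GraphStories
end
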